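/- arXiv:1002.3256 — 2 statements merged into one kernel-verified Lean document; each statement's English description precedes it below -/
import Mathlib

section
/- Under Jacod's density hypothesis and the noisy-barrier setup, set F^M_s(l) := p_s(l) 1_{X*_s > l} and N_t(x) := ∫_ℝ F^M_t(l) q_t(x − l) P^L(dl). For all 0 ≤ t ≤ T and every bounded F_T-measurable random variable ξ, let v : Ω × ℝ → ℝ be F_t ⊗ B(ℝ)-measurable and such that for P^L-almost every l, v(·,l) is a version of E_P[ξ F^M_T(l) | F_t]. Then, P-almost surely, E_P[ξ 1_{τ > T} | G^I_t] = ( 1_{τ > t} / N_t(L_t) ) ∫_ℝ v(·,l) q_t(L_t − l) P^L(dl), where the right-hand side is taken to be 0 on {τ ≤ t} (note that P(τ > t, N_t(L_t) = 0) = 0). (The terminal-payoff term in the proof of Theorem 5.1.) -/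
open MeasureTheory ProbabilityTheory Set
open scoped NNReal Classical

noncomputable section

/-- Running infimum `X*_t = inf_{s ≤ t} X_s` of the process `X` over the time interval
`[0, t]`. -/
def runInf {Ω : Type*} (X : ℝ≥0 → Ω → ℝ) (t : ℝ≥0) (ω : Ω) : ℝ :=
  ⨅ s : Set.Icc (0 : ℝ≥0) t, X s.1 ω

/-- The supermartingale `F^M_s(l) := p_s(l) 1_{X*_s > l}`. -/
def FM {Ω : Type*} (p : ℝ≥0 → ℝ → Ω → ℝ) (X : ℝ≥0 → Ω → ℝ) (s : ℝ≥0) (l : ℝ) (ω : Ω) : ℝ :=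
  p s l ω * (if l < runInf X s ω then 1 else 0)

/-- `N_t(x) := ∫ F^M_t(l) q_t(x − l) P^L(dl)`. -/
def NI {Ω : Type*} [m0 : MeasurableSpace Ω] (P : Measure Ω) (p : ℝ≥0 → ℝ → Ω → ℝ)
    (X : ℝ≥0 → Ω → ℝ) (L : Ω → ℝ) (q : ℝ≥0 → ℝ → ℝ) (t : ℝ≥0) (x : ℝ) (ω : Ω) : ℝ :=
  ∫ l, FM p X t l ω * q t (x - l) ∂(P.map L)

/-- The σ-algebra `σ({τ ≤ s} : s ≤ t)` generated by the default observations up to time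
`t`. -/
def defaultSigma {Ω : Type*} (τ : Ω → ℝ≥0) (t : ℝ≥0) : MeasurableSpace Ω :=
  MeasurableSpace.generateFrom {A | ∃ s ≤ t, A = {ω | τ ω ≤ s}}

/-- The insider's full σ-algebra
`G^I_t = F_t ∨ σ(L_s = L + ε_s : s ≤ t) ∨ σ({τ ≤ s} : s ≤ t)`. -/
def insiderFullSigma {Ω : Type*} [m0 : MeasurableSpace Ω] (F : Filtration ℝ≥0 m0)
    (L : Ω → ℝ) (ε : ℝ≥0 → Ω → ℝ) (τ : Ω → ℝ≥0) (t : ℝ≥0) : MeasurableSpace Ω :=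
  F t ⊔ (⨆ s ∈ Set.Iic t, MeasurableSpace.comap (fun ω => L ω + ε s ω) inferInstance) ⊔
    defaultSigma τ t

lemma ins_runInf_meas {Ω : Type*} {m : MeasurableSpace Ω} (X : ℝ≥0 → Ω → ℝ) (t : ℝ≥0)
    (hX : ∀ s ≤ t, Measurable (X s)) (hc : ∀ ω, Continuous fun s => X s ω) :
    Measurable (runInf X t) := by
  obtain ⟨S, hSc, hSd⟩ := TopologicalSpace.exists_countable_dense (Set.Icc (0 : ℝ≥0) t)
  have : runInf X t = fun ω => ⨅ s : S, X s.1.1 ω := by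
    funext ω
    exact (hSd.ciInf' (f := fun s : Set.Icc (0 : ℝ≥0) t => X s.1 ω)
      ((hc ω).comp continuous_subtype_val)).symm
  rw [this]
  have := hSc.to_subtype
  exact Measurable.iInf fun s => hX _ s.1.2.2

lemma ins_runInf_anti {Ω : Type*} (X : ℝ≥0 → Ω → ℝ) {t T : ℝ≥0} (h : t ≤ T)
    (hc : ∀ ω, Continuous fun s => X s ω) (ω : Ω) : runInf X T ω ≤ runInf X t ω := by
  unfold runInf
  have hne : Nonempty (Set.Icc (0 : ℝ≥0) t) := ⟨⟨0, by simp⟩⟩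
  refine le_ciInf fun s => ?_
  have hb : BddBelow (range fun s : Set.Icc (0 : ℝ≥0) T => X s.1 ω) :=
    (isCompact_range ((hc ω).comp continuous_subtype_val)).bddBelow
  exact ciInf_le hb (⟨s.1, s.2.1, s.2.2.trans h⟩ : Set.Icc (0 : ℝ≥0) T)

/-- density identity from rectangles -/
lemma ins_jacod {Ω E : Type*} [MeasurableSpace Ω] [MeasurableSpace E] {P : Measure Ω}
    [IsProbabilityMeasure P] {Z : Ω → E} (hZ : Measurable Z) {L : Ω → ℝ} (hL : Measurable L)
    {p : E × ℝ → ENNReal} (hp : Measurable p)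
    (hrect : ∀ a f, MeasurableSet a → MeasurableSet f → P (Z ⁻¹' a ∩ L ⁻¹' f) =
      ∫⁻ ω in Z ⁻¹' a, ∫⁻ l in f, p (Z ω, l) ∂(P.map L) ∂P)
    (h : E × ℝ → ENNReal) (hh : Measurable h) :
    ∫⁻ ω, h (Z ω, L ω) ∂P =
      ∫⁻ y, h (Z y.1, y.2) * p (Z y.1, y.2) ∂(P.prod (P.map L)) := by
  have : IsProbabilityMeasure (P.map L) := Measure.isProbabilityMeasure_map hL.aemeasurable
  have hW : Measurable fun ω => (Z ω, L ω) := hZ.prodMk hL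
  have hV : Measurable fun y : Ω × ℝ => (Z y.1, y.2) := (hZ.comp measurable_fst).prodMk measurable_snd
  have hpV : Measurable fun y : Ω × ℝ => p (Z y.1, y.2) := hp.comp hV
  have hhV : Measurable fun y : Ω × ℝ => h (Z y.1, y.2) := hh.comp hV
  have key : P.map (fun ω => (Z ω, L ω)) =
      ((P.prod (P.map L)).withDensity (fun y => p (Z y.1, y.2))).map (fun y => (Z y.1, y.2)) := by
    have : IsProbabilityMeasure (P.map fun ω => (Z ω, L ω)) :=
      Measure.isProbabilityMeasure_map hW.aemeasurable
    have hr : ∀ a f, MeasurableSet a → MeasurableSet f →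
        P.map (fun ω => (Z ω, L ω)) (a ×ˢ f) =
        ((P.prod (P.map L)).withDensity (fun y => p (Z y.1, y.2))).map
          (fun y => (Z y.1, y.2)) (a ×ˢ f) := by
      intro a f ha hf
      rw [Measure.map_apply hW (ha.prod hf), Measure.map_apply hV (ha.prod hf),
        withDensity_apply _ (hV (ha.prod hf))]
      have e1 : (fun ω => (Z ω, L ω)) ⁻¹' (a ×ˢ f) = Z ⁻¹' a ∩ L ⁻¹' f := by ext; simp
      have e2 : (fun y : Ω × ℝ => (Z y.1, y.2)) ⁻¹' (a ×ˢ f) = (Z ⁻¹' a) ×ˢ f := by ext; simp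
      rw [e1, e2, hrect a f ha hf, setLIntegral_prod _ hpV.aemeasurable]
    refine ext_of_generate_finite _ generateFrom_prod.symm isPiSystem_prod ?_ ?_
    · rintro _ ⟨a, ha, f, hf, rfl⟩
      exact hr a f ha hf
    · rw [← univ_prod_univ]; exact hr _ _ .univ .univ
  rw [← lintegral_map hh hW, key, lintegral_map hh hV,
    lintegral_withDensity_eq_lintegral_mul _ hpV hhV]
  simp [mul_comm]

lemma ins_law {Ω E : Type*} [MeasurableSpace Ω] [MeasurableSpace E] {P : Measure Ω}
    [IsProbabilityMeasure P] {Z : Ω → E} (hZ : Measurable Z) {L Y : Ω → ℝ} (hL : Measurable L)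
    (hY : Measurable Y) {b : Set Ω} (hb : MeasurableSet b)
    {p : E × ℝ → ENNReal} (hp : Measurable p) {q : ℝ → ENNReal} (hq : Measurable q)
    (hJ : ∀ h : E × ℝ → ENNReal, Measurable h → ∫⁻ ω, h (Z ω, L ω) ∂P =
      ∫⁻ y, h (Z y.1, y.2) * p (Z y.1, y.2) ∂(P.prod (P.map L)))
    (hI : ∀ A D, MeasurableSet A → MeasurableSet D →
      P (b ∩ ((fun ω => (Z ω, L ω)) ⁻¹' A ∩ Y ⁻¹' D)) =
        P b * P ((fun ω => (Z ω, L ω)) ⁻¹' A) * P (Y ⁻¹' D))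
    (hYq : P.map Y = volume.withDensity q)
    (h : (E × ℝ) × ℝ → ENNReal) (hh : Measurable h) :
    ∫⁻ ω in b, h ((Z ω, L ω + Y ω), L ω) ∂P = P b * ∫⁻ y, h ((Z y.1.1, y.1.2), y.2) *
      (p (Z y.1.1, y.2) * q (y.1.2 - y.2)) ∂((P.prod volume).prod (P.map L)) := by
  have : IsProbabilityMeasure (P.map L) := Measure.isProbabilityMeasure_map hL.aemeasurable
  have hW : Measurable fun ω => (Z ω, L ω) := hZ.prodMk hL
  have : IsProbabilityMeasure (P.map Y) := Measure.isProbabilityMeasure_map hY.aemeasurable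
  have : IsProbabilityMeasure (P.map (fun ω => (Z ω, L ω))) :=
    Measure.isProbabilityMeasure_map hW.aemeasurable
  have hWY : Measurable fun ω => ((Z ω, L ω), Y ω) := hW.prodMk hY
  have key : (P b • P.map (fun ω => (Z ω, L ω))).prod (P.map Y) =
      (P.restrict b).map (fun ω => ((Z ω, L ω), Y ω)) := by
    have : IsFiniteMeasure (P b • P.map (fun ω => (Z ω, L ω))) :=
      Measure.smul_finite _ (measure_ne_top _ _)
    refine Measure.prod_eq fun A D hA hD => ?_
    rw [Measure.map_apply hWY (hA.prod hD), Measure.restrict_apply (hWY (hA.prod hD)),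
      Measure.smul_apply, Measure.map_apply hW hA, Measure.map_apply hY hD, smul_eq_mul,
      ← hI A D hA hD, inter_comm]
    rfl
  have hφ : Measurable fun u : (E × ℝ) × ℝ => h ((u.1.1, u.1.2 + u.2), u.1.2) :=
    hh.comp (by fun_prop)
  calc ∫⁻ ω in b, h ((Z ω, L ω + Y ω), L ω) ∂P
      = ∫⁻ u, h ((u.1.1, u.1.2 + u.2), u.1.2) ∂((P.restrict b).map (fun ω => ((Z ω, L ω), Y ω))) := by
        rw [lintegral_map hφ hWY]
    _ = P b * ∫⁻ w, ∫⁻ y, h ((w.1, w.2 + y), w.2) ∂(P.map Y) ∂(P.map (fun ω => (Z ω, L ω))) := by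
        rw [← key, Measure.prod_smul_left, lintegral_smul_measure, lintegral_prod _ hφ.aemeasurable]
        rfl
    _ = P b * ∫⁻ w, ∫⁻ x, h ((w.1, x), w.2) * q (x - w.2) ∂volume ∂(P.map (fun ω => (Z ω, L ω))) := by
        congr 1
        refine lintegral_congr fun w => ?_
        have hhw : Measurable fun y => h ((w.1, w.2 + y), w.2) := hh.comp (by fun_prop)
        rw [hYq, lintegral_withDensity_eq_lintegral_mul _ hq hhw,
          ← lintegral_sub_right_eq_self _ w.2]
        refine lintegral_congr fun x => ?_
        simp [mul_comm]
    _ = P b * ∫⁻ y, (∫⁻ x, h ((Z y.1, x), y.2) * q (x - y.2)) * p (Z y.1, y.2)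
          ∂(P.prod (P.map L)) := by
        have hm : Measurable fun w : E × ℝ => ∫⁻ x, h ((w.1, x), w.2) * q (x - w.2) := by
          refine Measurable.lintegral_prod_right' (f := fun u : (E × ℝ) × ℝ =>
            h ((u.1.1, u.2), u.1.2) * q (u.2 - u.1.2)) ?_
          exact (hh.comp (by fun_prop)).mul (hq.comp (by fun_prop))
        rw [lintegral_map hm hW]
        congr 1
        exact hJ _ hm
    _ = _ := by
        have hm3 : Measurable fun u : (Ω × ℝ) × ℝ => h ((Z u.1.1, u.1.2), u.2) *
            (p (Z u.1.1, u.2) * q (u.1.2 - u.2)) := by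
          exact (hh.comp (by fun_prop)).mul ((hp.comp (by fun_prop)).mul (hq.comp (by fun_prop)))
        have hm : Measurable fun w : E × ℝ => ∫⁻ x, h ((w.1, x), w.2) * q (x - w.2) := by
          refine Measurable.lintegral_prod_right' (f := fun u : (E × ℝ) × ℝ =>
            h ((u.1.1, u.2), u.1.2) * q (u.2 - u.1.2)) ?_
          exact (hh.comp (by fun_prop)).mul (hq.comp (by fun_prop))
        have hV : Measurable fun y : Ω × ℝ => (Z y.1, y.2) := by fun_prop
        have hmV : Measurable fun y : Ω × ℝ =>
            (∫⁻ x, h ((Z y.1, x), y.2) * q (x - y.2)) * p (Z y.1, y.2) :=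
          (hm.comp hV).mul (hp.comp hV)
        congr 1
        rw [lintegral_prod _ hmV.aemeasurable,
          lintegral_prod _ hm3.aemeasurable,
          lintegral_prod _ (hm3.lintegral_prod_right').aemeasurable]
        refine lintegral_congr fun ω => ?_
        rw [lintegral_lintegral_swap]
        · refine lintegral_congr fun l => ?_
          rw [← lintegral_mul_const]
          · refine lintegral_congr fun x => ?_
            ring
          · exact (hh.comp (by fun_prop)).mul (hq.comp (by fun_prop))
        · exact (hm3.comp (f := fun u : ℝ × ℝ => ((ω, u.1), u.2)) (by fun_prop)).aemeasurable

/-- Bochner version. -/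
lemma ins_law_int {Ω E : Type*} [MeasurableSpace Ω] [MeasurableSpace E] {P : Measure Ω}
    [IsProbabilityMeasure P] {Z : Ω → E} (hZ : Measurable Z) {L Y : Ω → ℝ} (hL : Measurable L)
    (hY : Measurable Y) {b : Set Ω}
    {ρ : (Ω × ℝ) × ℝ → ℝ} (hρ : Measurable ρ) (hρ0 : ∀ y, 0 ≤ ρ y)
    (H : ∀ h : (E × ℝ) × ℝ → ENNReal, Measurable h →
      ∫⁻ ω in b, h ((Z ω, L ω + Y ω), L ω) ∂P = P b * ∫⁻ y, h ((Z y.1.1, y.1.2), y.2) *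
      ENNReal.ofReal (ρ y) ∂((P.prod volume).prod (P.map L)))
    (h : (E × ℝ) × ℝ → ℝ) (hh : Measurable h) :
    ∫ ω in b, h ((Z ω, L ω + Y ω), L ω) ∂P = (P b).toReal * ∫ y, h ((Z y.1.1, y.1.2), y.2) *
      ρ y ∂((P.prod volume).prod (P.map L)) := by
  have hW : Measurable fun ω => ((Z ω, L ω + Y ω), L ω) := by fun_prop
  have hV : Measurable fun y : (Ω × ℝ) × ℝ => ((Z y.1.1, y.1.2), y.2) := by fun_prop
  have key : (P.restrict b).map (fun ω => ((Z ω, L ω + Y ω), L ω)) =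
      P b • (((P.prod volume).prod (P.map L)).withDensity (fun y => ENNReal.ofReal (ρ y))).map
        (fun y => ((Z y.1.1, y.1.2), y.2)) := by
    refine Measure.ext_of_lintegral _ fun f hf => ?_
    have hfV : Measurable fun y : (Ω × ℝ) × ℝ => f ((Z y.1.1, y.1.2), y.2) := hf.comp hV
    rw [lintegral_map hf hW, H f hf, lintegral_smul_measure, lintegral_map hf hV,
      lintegral_withDensity_eq_lintegral_mul _ hρ.ennreal_ofReal hfV]
    simp [mul_comm]
  rw [← integral_map hW.aemeasurable hh.aestronglyMeasurable, key, integral_smul_measure,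
    integral_map hV.aemeasurable hh.aestronglyMeasurable,
    integral_withDensity_eq_integral_toReal_smul hρ.ennreal_ofReal (by simp)]
  simp only [smul_eq_mul, ENNReal.toReal_ofReal (hρ0 _)]
  simp only [mul_comm]

lemma ins_rect {Ω : Type*} {m m0 : MeasurableSpace Ω} {P : Measure Ω}
    [IsProbabilityMeasure P] (hm : m ≤ m0) {L : Ω → ℝ} (hL : Measurable L)
    (p : ℝ → Ω → ℝ) (hp0 : ∀ x ω, 0 ≤ p x ω)
    (hpm : Measurable[m.prod inferInstance] fun q : Ω × ℝ => p q.2 q.1)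
    (hd : ∀ (f : ℝ → ℝ), Measurable f → (∃ C, ∀ x, |f x| ≤ C) →
      (P[fun ω => f (L ω)|m]) =ᵐ[P] fun ω => ∫ x, f x * p x ω ∂(P.map L))
    (a : Set Ω) (f : Set ℝ) (ha : MeasurableSet[m] a) (hf : MeasurableSet f) :
    P (a ∩ L ⁻¹' f) = ∫⁻ ω in a, ∫⁻ l in f, ENNReal.ofReal (p l ω) ∂(P.map L) ∂P := by
  have hpint : ∀ᵐ ω ∂P, Integrable (fun x => p x ω) (P.map L) := by
    have h1 := hd (fun _ => 1) measurable_const ⟨1, by simp⟩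
    simp only [one_mul] at h1
    rw [condExp_const hm] at h1
    filter_upwards [h1] with ω hω
    by_contra hc
    rw [integral_undef hc] at hω
    exact one_ne_zero hω
  have h2 := hd (f.indicator fun _ => 1) (measurable_const.indicator hf)
    ⟨1, fun x => by by_cases hx : x ∈ f <;> simp [hx]⟩
  have hfi : Integrable (fun ω => f.indicator (fun _ => (1 : ℝ)) (L ω)) P := by
    refine Integrable.of_bound (C := 1) ?_ ?_
    · exact ((measurable_const.indicator hf).comp hL).aestronglyMeasurable
    · refine ae_of_all _ fun ω => ?_
      by_cases hx : L ω ∈ f <;> simp [hx]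
  have h3 := setIntegral_condExp hm hfi ha
  have h4 : ∫ ω in a, f.indicator (fun _ => (1 : ℝ)) (L ω) ∂P = P.real (a ∩ L ⁻¹' f) := by
    have : (fun ω => f.indicator (fun _ => (1 : ℝ)) (L ω)) = (L ⁻¹' f).indicator fun _ => 1 := by
      ext ω; simp [indicator]
    rw [this, setIntegral_indicator (hL hf)]
    simp
  have h5 : Integrable (fun ω => ∫ x, f.indicator (fun _ => (1 : ℝ)) x * p x ω ∂(P.map L)) P :=
    integrable_condExp.congr h2
  have h6 : P (a ∩ L ⁻¹' f) = ENNReal.ofReal (∫ ω in a, ∫ x, f.indicator (fun _ => (1 : ℝ)) x * p x ω ∂(P.map L) ∂P) := by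
    rw [← integral_congr_ae (ae_restrict_of_ae h2), h3, h4]
    simp [Measure.real]
  have hnn : ∀ x ω, 0 ≤ f.indicator (fun _ => (1 : ℝ)) x * p x ω := fun x ω =>
    mul_nonneg (indicator_nonneg (by simp) _) (hp0 _ _)
  rw [h6, ofReal_integral_eq_lintegral_ofReal h5.integrableOn
    (ae_of_all _ fun ω => integral_nonneg fun x => hnn x ω)]
  refine lintegral_congr_ae (ae_restrict_of_ae ?_)
  filter_upwards [hpint] with ω hω
  have e : (fun x => f.indicator (fun _ => (1 : ℝ)) x * p x ω) = f.indicator fun x => p x ω := by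
    ext x; by_cases hx : x ∈ f <;> simp [hx]
  rw [e, integral_indicator hf, ofReal_integral_eq_lintegral_ofReal hω.integrableOn
    (ae_of_all _ fun x => hp0 x ω)]

lemma ins_prod_le {Ω : Type*} {m m0 : MeasurableSpace Ω} (hm : m ≤ m0) :
    m.prod (inferInstance : MeasurableSpace ℝ) ≤ m0.prod (inferInstance : MeasurableSpace ℝ) :=
  sup_le_sup (MeasurableSpace.comap_mono hm) le_rfl

lemma ins_J {Ω : Type*} {m m0 : MeasurableSpace Ω} {P : Measure Ω}
    [IsProbabilityMeasure P] (hm : m ≤ m0) {L : Ω → ℝ} (hL : Measurable L)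
    (p : ℝ → Ω → ℝ) (hp0 : ∀ x ω, 0 ≤ p x ω)
    (hpm : Measurable[m.prod inferInstance] fun q : Ω × ℝ => p q.2 q.1)
    (hd : ∀ (f : ℝ → ℝ), Measurable f → (∃ C, ∀ x, |f x| ≤ C) →
      (P[fun ω => f (L ω)|m]) =ᵐ[P] fun ω => ∫ x, f x * p x ω ∂(P.map L))
    (h : Ω × ℝ → ENNReal) (hh : Measurable[m.prod inferInstance] h) :
    ∫⁻ ω, h (ω, L ω) ∂P = ∫⁻ y, h y * ENNReal.ofReal (p y.2 y.1) ∂(P.prod (P.map L)) :=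
  @ins_jacod Ω Ω m0 m P _ id (measurable_id'' hm) L hL
    (fun y => ENNReal.ofReal (p y.2 y.1)) (ENNReal.measurable_ofReal.comp hpm)
    (fun a f ha hf => ins_rect hm hL p hp0 hpm hd a f ha hf) h hh

lemma ins_v_integrable {Ω : Type*} {m m0 : MeasurableSpace Ω} {P : Measure Ω}
    [IsProbabilityMeasure P] (hm : m ≤ m0) {μ : Measure ℝ} [IsProbabilityMeasure μ]
    {g v : Ω × ℝ → ℝ} (hg : Integrable g (P.prod μ))
    (hvm : Measurable[m.prod inferInstance] v)
    (hv : ∀ᵐ l ∂μ, (fun ω => v (ω, l)) =ᵐ[P] P[fun ω => g (ω, l)|m]) :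
    Integrable v (P.prod μ) := by
  have hvm0 : Measurable v := hvm.mono (ins_prod_le hm) le_rfl
  rw [integrable_prod_iff' hvm0.aestronglyMeasurable]
  refine ⟨?_, ?_⟩
  · filter_upwards [hv] with l hl
    exact integrable_condExp.congr hl.symm
  · refine Integrable.mono' hg.integral_norm_prod_right ?_ ?_
    · exact (hvm0.aestronglyMeasurable (μ := P.prod μ)).norm.prod_swap.integral_prod_right'
    · filter_upwards [hv] with l hl
      rw [Real.norm_of_nonneg (integral_nonneg fun ω => norm_nonneg _)]
      have e : (fun ω => ‖v (ω, l)‖) =ᵐ[P] fun ω => ‖(P[fun ω => g (ω, l)|m]) ω‖ :=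
        hl.fun_comp norm
      rw [integral_congr_ae e]
      exact integral_abs_condExp_le _

lemma ins_v_set {Ω : Type*} {m m0 : MeasurableSpace Ω} {P : Measure Ω}
    [IsProbabilityMeasure P] (hm : m ≤ m0) {μ : Measure ℝ} [IsProbabilityMeasure μ]
    {g v : Ω × ℝ → ℝ} (hg : Integrable g (P.prod μ))
    (hvm : Measurable[m.prod inferInstance] v)
    (hv : ∀ᵐ l ∂μ, (fun ω => v (ω, l)) =ᵐ[P] P[fun ω => g (ω, l)|m])
    (S : Set (Ω × ℝ)) (hS : MeasurableSet[m.prod inferInstance] S) :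
    ∫ y in S, v y ∂(P.prod μ) = ∫ y in S, g y ∂(P.prod μ) := by
  have hS0 : MeasurableSet S := ins_prod_le hm _ hS
  have hvi := ins_v_integrable hm hg hvm hv
  rw [← integral_indicator hS0, ← integral_indicator hS0,
    integral_prod_symm _ (hvi.indicator hS0), integral_prod_symm _ (hg.indicator hS0)]
  refine integral_congr_ae ?_
  filter_upwards [hv, hg.prod_left_ae] with l hl hgl
  have hSl : MeasurableSet[m] ((fun ω => (ω, l)) ⁻¹' S) :=
    (@measurable_prodMk_right Ω ℝ m _ l) hS
  have e : ∀ w : Ω × ℝ → ℝ, ∫ ω, S.indicator w (ω, l) ∂P =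
      ∫ ω in (fun ω => (ω, l)) ⁻¹' S, w (ω, l) ∂P := by
    intro w
    rw [← integral_indicator (hm _ hSl)]
    rfl
  rw [e, e, ← setIntegral_condExp hm hgl hSl]
  exact integral_congr_ae (ae_restrict_of_ae hl)

lemma ins_v_le {Ω : Type*} {m m0 : MeasurableSpace Ω} {P : Measure Ω}
    [IsProbabilityMeasure P] (hm : m ≤ m0) {μ : Measure ℝ} [IsProbabilityMeasure μ]
    {g v d : Ω × ℝ → ℝ} (hg : Integrable g (P.prod μ))
    (hvm : Measurable[m.prod inferInstance] v)
    (hv : ∀ᵐ l ∂μ, (fun ω => v (ω, l)) =ᵐ[P] P[fun ω => g (ω, l)|m])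
    (hdm : Measurable[m.prod inferInstance] d) (hd : Integrable d (P.prod μ))
    (hle : ∀ S, MeasurableSet[m.prod inferInstance] S →
      ∫ y in S, g y ∂(P.prod μ) ≤ ∫ y in S, d y ∂(P.prod μ)) :
    ∀ᵐ y ∂(P.prod μ), v y ≤ d y := by
  have hS : MeasurableSet[m.prod inferInstance] {y | d y < v y} :=
    measurableSet_lt hdm hvm
  have hS0 : MeasurableSet {y | d y < v y} := ins_prod_le hm _ hS
  have hvi := ins_v_integrable hm hg hvm hv
  have h1 := hle _ hS
  rw [← ins_v_set hm hg hvm hv _ hS] at h1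
  have h2 : ∫ y, {y | d y < v y}.indicator (fun y => v y - d y) y ∂(P.prod μ) ≤ 0 := by
    rw [integral_indicator hS0, integral_sub hvi.integrableOn hd.integrableOn]
    linarith
  have hnn : 0 ≤ {y | d y < v y}.indicator (fun y => v y - d y) := by
    refine indicator_nonneg fun y hy => ?_
    have : d y < v y := hy
    linarith
  have h3 := (integral_eq_zero_iff_of_nonneg hnn ((hvi.sub hd).indicator hS0)).1
    (le_antisymm h2 (integral_nonneg hnn))
  filter_upwards [h3] with y hy
  by_contra hc
  rw [indicator_of_mem (by simpa using hc)] at hy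
  simp only [Pi.zero_apply] at hy
  linarith

lemma ins_reorder {Ω : Type*} {m0 : MeasurableSpace Ω} {P : Measure Ω}
    [IsProbabilityMeasure P] {μ : Measure ℝ} [IsProbabilityMeasure μ]
    {G : (Ω × ℝ) × ℝ → ℝ} (hG : Integrable G ((P.prod volume).prod μ)) :
    ∫ y, G y ∂((P.prod volume).prod μ) =
      ∫ z, ∫ ω, G ((ω, z.1), z.2) ∂P ∂((volume : Measure ℝ).prod μ) := by
  have hmp := (measurePreserving_prodAssoc P (volume : Measure ℝ) μ).symm
  rw [← hmp.integral_comp' G, integral_prod_symm]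
  · rfl
  · exact hmp.integrable_comp_of_integrable hG

lemma ins_reorder_eq {Ω : Type*} {m m0 : MeasurableSpace Ω} {P : Measure Ω}
    [IsProbabilityMeasure P] (hm : m ≤ m0) {μ : Measure ℝ} [IsProbabilityMeasure μ]
    {g v : Ω × ℝ → ℝ} (hg : Integrable g (P.prod μ))
    (hv : ∀ᵐ l ∂μ, (fun ω => v (ω, l)) =ᵐ[P] P[fun ω => g (ω, l)|m])
    (a : Set Ω) (ha : MeasurableSet[m] a) (k : ℝ → ℝ → ℝ)
    (h1 : Integrable (fun y : (Ω × ℝ) × ℝ => a.indicator 1 y.1.1 * k y.1.2 y.2 * v (y.1.1, y.2))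
      ((P.prod volume).prod μ))
    (h2 : Integrable (fun y : (Ω × ℝ) × ℝ => a.indicator 1 y.1.1 * k y.1.2 y.2 * g (y.1.1, y.2))
      ((P.prod volume).prod μ)) :
    ∫ y, a.indicator 1 y.1.1 * k y.1.2 y.2 * v (y.1.1, y.2) ∂((P.prod volume).prod μ) =
    ∫ y, a.indicator 1 y.1.1 * k y.1.2 y.2 * g (y.1.1, y.2) ∂((P.prod volume).prod μ) := by
  rw [ins_reorder h1, ins_reorder h2]
  have hv2 : ∀ᵐ z ∂((volume : Measure ℝ).prod μ),
      (fun ω => v (ω, z.2)) =ᵐ[P] P[fun ω => g (ω, z.2)|m] :=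
    Measure.quasiMeasurePreserving_snd.ae hv
  have hg2 : ∀ᵐ z ∂((volume : Measure ℝ).prod μ), Integrable (fun ω => g (ω, z.2)) P :=
    Measure.quasiMeasurePreserving_snd.ae hg.prod_left_ae
  refine integral_congr_ae ?_
  filter_upwards [hv2, hg2] with z hz hgz
  have e : ∀ w : Ω → ℝ, ∫ ω, a.indicator 1 ω * k z.1 z.2 * w ω ∂P =
      k z.1 z.2 * ∫ ω in a, w ω ∂P := by
    intro w
    rw [← integral_indicator (hm _ ha), ← integral_const_mul]
    congr 1
    ext ω
    by_cases h : ω ∈ a <;> simp [h]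
  rw [e fun ω => v (ω, z.2), e fun ω => g (ω, z.2), ← setIntegral_condExp hm hgz ha]
  congr 1
  exact integral_congr_ae (ae_restrict_of_ae hz)

lemma ins_meas_add {Ω : Type*} {m : MeasurableSpace Ω} {f g : Ω → ℝ} (hf : Measurable f)
    (hg : Measurable g) : Measurable fun ω => f ω + g ω := hf.add hg

lemma ins_ind {Ω : Type*} {m1 m2 m3 m0 : MeasurableSpace Ω} {P : Measure Ω}
    (h1 : m1 ≤ m0) (h2 : m2 ≤ m0) (h3 : m3 ≤ m0) {f g : Ω → ℝ}
    (hf : Integrable f P) (hg : Integrable g P)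
    (H : ∀ a b c, MeasurableSet[m1] a → MeasurableSet[m2] b → MeasurableSet[m3] c →
      ∫ ω in a ∩ b ∩ c, f ω ∂P = ∫ ω in a ∩ b ∩ c, g ω ∂P)
    (A : Set Ω) (hA : MeasurableSet[m1 ⊔ m2 ⊔ m3] A) :
    ∫ ω in A, f ω ∂P = ∫ ω in A, g ω ∂P := by
  let C : Set (Set Ω) := {A | ∃ a b c, MeasurableSet[m1] a ∧ MeasurableSet[m2] b ∧
    MeasurableSet[m3] c ∧ A = a ∩ b ∩ c}
  have hle : m1 ⊔ m2 ⊔ m3 ≤ MeasurableSpace.generateFrom C := by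
    refine sup_le (sup_le ?_ ?_) ?_
    · intro a ha
      exact MeasurableSpace.measurableSet_generateFrom
        ⟨a, univ, univ, ha, @MeasurableSet.univ _ m2, @MeasurableSet.univ _ m3, by simp⟩
    · intro a ha
      exact MeasurableSpace.measurableSet_generateFrom
        ⟨univ, a, univ, @MeasurableSet.univ _ m1, ha, @MeasurableSet.univ _ m3, by simp⟩
    · intro a ha
      exact MeasurableSpace.measurableSet_generateFrom
        ⟨univ, univ, a, @MeasurableSet.univ _ m1, @MeasurableSet.univ _ m2, ha, by simp⟩
  have hC0 : MeasurableSpace.generateFrom C ≤ m0 := by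
    refine MeasurableSpace.generateFrom_le ?_
    rintro _ ⟨a, b, c, ha, hb, hc, rfl⟩
    exact ((h1 _ ha).inter (h2 _ hb)).inter (h3 _ hc)
  have hpi : IsPiSystem C := by
    rintro _ ⟨a, b, c, ha, hb, hc, rfl⟩ _ ⟨a', b', c', ha', hb', hc', rfl⟩ _
    refine ⟨a ∩ a', b ∩ b', c ∩ c', @MeasurableSet.inter _ m1 _ _ ha ha',
      @MeasurableSet.inter _ m2 _ _ hb hb', @MeasurableSet.inter _ m3 _ _ hc hc', ?_⟩
    ext ω
    simp only [mem_inter_iff]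
    tauto
  have huniv : ∫ ω, f ω ∂P = ∫ ω, g ω ∂P := by
    simpa using H univ univ univ (@MeasurableSet.univ _ m1) (@MeasurableSet.univ _ m2)
      (@MeasurableSet.univ _ m3)
  refine MeasurableSpace.induction_on_inter (m := MeasurableSpace.generateFrom C)
    (C := fun A _ => ∫ ω in A, f ω ∂P = ∫ ω in A, g ω ∂P) rfl hpi (by simp) ?_ ?_ ?_ A (hle _ hA)
  · rintro _ ⟨a, b, c, ha, hb, hc, rfl⟩
    exact H a b c ha hb hc
  · intro B hB hBe
    have e1 := integral_add_compl (hC0 _ hB) hf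
    have e2 := integral_add_compl (hC0 _ hB) hg
    linarith
  · intro B hd hB hBe
    rw [integral_iUnion (fun i => hC0 _ (hB i)) hd hf.integrableOn,
      integral_iUnion (fun i => hC0 _ (hB i)) hd hg.integrableOn]
    simp only [hBe]

lemma ins_trace {Ω : Type*} [m0 : MeasurableSpace Ω] (F : Filtration ℝ≥0 m0)
    (L : Ω → ℝ) (ε : ℝ≥0 → Ω → ℝ) (τ : Ω → ℝ≥0) (t : ℝ≥0) (A : Set Ω)
    (hA : MeasurableSet[insiderFullSigma F L ε τ t] A) :
    ∃ A', MeasurableSet[F t ⊔ MeasurableSpace.comap (fun ω => L ω + ε t ω) inferInstance ⊔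
      ⨆ s ∈ Set.Iic t, MeasurableSpace.comap (fun ω => ε s ω - ε t ω) inferInstance] A' ∧
      A ∩ {ω | t < τ ω} = A' ∩ {ω | t < τ ω} := by
  set mI := F t ⊔ MeasurableSpace.comap (fun ω => L ω + ε t ω) inferInstance ⊔
      ⨆ s ∈ Set.Iic t, MeasurableSpace.comap (fun ω => ε s ω - ε t ω) inferInstance with hmI
  let ι : {ω | t < τ ω} → Ω := Subtype.val
  have hle1 : F t ⊔ (⨆ s ∈ Set.Iic t,
      MeasurableSpace.comap (fun ω => L ω + ε s ω) inferInstance) ≤ mI := by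
    refine sup_le (le_sup_of_le_left le_sup_left) (iSup₂_le fun s hs => ?_)
    rw [← measurable_iff_comap_le]
    have e : (fun ω => L ω + ε s ω) = fun ω => (L ω + ε t ω) + (ε s ω - ε t ω) := by
      ext ω; ring
    rw [e]
    have i1 : Measurable[mI] fun ω => L ω + ε t ω := by
      rw [measurable_iff_comap_le]
      exact le_sup_of_le_left le_sup_right
    have i2 : Measurable[mI] fun ω => ε s ω - ε t ω := by
      rw [measurable_iff_comap_le]
      exact le_sup_of_le_right (le_iSup₂ (f := fun s (_ : s ∈ Set.Iic t) =>
        MeasurableSpace.comap (fun ω => ε s ω - ε t ω) inferInstance) s hs)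
    exact ins_meas_add i1 i2
  have hle : (insiderFullSigma (m0 := m0) F L ε τ t).comap ι ≤ mI.comap ι := by
    unfold insiderFullSigma
    rw [MeasurableSpace.comap_sup]
    refine sup_le (MeasurableSpace.comap_mono hle1) ?_
    unfold defaultSigma
    rw [MeasurableSpace.comap_generateFrom]
    refine MeasurableSpace.generateFrom_le ?_
    rintro _ ⟨_, ⟨s, hs, rfl⟩, rfl⟩
    have : ι ⁻¹' {ω | τ ω ≤ s} = ∅ := by
      ext ⟨ω, hω⟩
      simp only [mem_preimage, mem_ofPred_eq, mem_empty_iff_false, iff_false, not_le]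
      exact lt_of_le_of_lt hs hω
    rw [this]
    exact @MeasurableSet.empty _ (mI.comap ι)
  obtain ⟨A', hA', he⟩ := hle _ ⟨A, hA, rfl⟩
  refine ⟨A', hA', ?_⟩
  ext ω
  simp only [mem_inter_iff, mem_ofPred_eq, and_congr_left_iff]
  intro hω
  have := Set.ext_iff.1 he ⟨ω, hω⟩
  exact this.symm

lemma ins_meas_conv {Ω : Type*} {m : MeasurableSpace Ω} {μ : Measure ℝ} [IsProbabilityMeasure μ]
    {w : Ω × ℝ → ℝ} (hw : Measurable w) {q : ℝ → ℝ} (hq : Measurable q) :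
    Measurable fun u : Ω × ℝ => ∫ l, w (u.1, l) * q (u.2 - l) ∂μ := by
  have : Measurable fun y : (Ω × ℝ) × ℝ => w (y.1.1, y.2) * q (y.1.2 - y.2) :=
    (hw.comp (by fun_prop)).mul (hq.comp (by fun_prop))
  exact this.stronglyMeasurable.integral_prod_right'.measurable

lemma ins_meas_lt {Ω : Type*} {m : MeasurableSpace Ω} {r : Ω → ℝ} (hr : Measurable r) :
    Measurable fun y : Ω × ℝ => (if y.2 < r y.1 then (1 : ℝ) else 0) :=
  Measurable.ite (measurableSet_lt measurable_snd (hr.comp measurable_fst))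
    measurable_const measurable_const

lemma ins_meas_FM {Ω : Type*} {m : MeasurableSpace Ω} (p : ℝ≥0 → ℝ → Ω → ℝ)
    (X : ℝ≥0 → Ω → ℝ) (s : ℝ≥0) (hr : Measurable (runInf X s))
    (hp : Measurable fun q : Ω × ℝ => p s q.2 q.1) :
    Measurable fun y : Ω × ℝ => FM p X s y.2 y.1 :=
  hp.mul (ins_meas_lt hr)

lemma ins_indep {Ω : Type*} [m0 : MeasurableSpace Ω] {P : Measure Ω} [IsProbabilityMeasure P]
    (F : Filtration ℝ≥0 m0) (L : Ω → ℝ) (ε : ℝ≥0 → Ω → ℝ)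
    (hε_indep : Indep (⨆ s, MeasurableSpace.comap (ε s) inferInstance)
      ((⨆ s, F s) ⊔ MeasurableSpace.comap L inferInstance) P)
    (hε_back : ∀ t θ : ℝ≥0, t ≤ θ →
      Indep (⨆ s ∈ Set.Iic t, MeasurableSpace.comap (fun ω => ε s ω - ε t ω) inferInstance)
        (MeasurableSpace.comap (ε θ) inferInstance) P)
    (s t : ℝ≥0) (b : Set Ω) (hb : MeasurableSet[⨆ s ∈ Set.Iic t,
      MeasurableSpace.comap (fun ω => ε s ω - ε t ω) inferInstance] b)
    (A : Set (Ω × ℝ)) (D : Set ℝ) (hA : MeasurableSet[(F s).prod inferInstance] A)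
    (hD : MeasurableSet D) :
    P (b ∩ ((fun ω => (ω, L ω)) ⁻¹' A ∩ ε t ⁻¹' D)) =
        P b * P ((fun ω => (ω, L ω)) ⁻¹' A) * P (ε t ⁻¹' D) := by
  have hεs : ∀ s, MeasurableSpace.comap (ε s) inferInstance ≤
      ⨆ s, MeasurableSpace.comap (ε s) inferInstance := fun s =>
    le_iSup (fun s => MeasurableSpace.comap (ε s) inferInstance) s
  have hb' : MeasurableSet[⨆ s, MeasurableSpace.comap (ε s) inferInstance] b := by
    refine (iSup₂_le fun s hs => ?_ : (⨆ s ∈ Set.Iic t,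
      MeasurableSpace.comap (fun ω => ε s ω - ε t ω) inferInstance) ≤ _) _ hb
    rw [← measurable_iff_comap_le]
    have i1 := measurable_iff_comap_le.2 (hεs s)
    have i2 := measurable_iff_comap_le.2 (hεs t)
    exact i1.sub i2
  have hDt : MeasurableSet[MeasurableSpace.comap (ε t) inferInstance] (ε t ⁻¹' D) := ⟨D, hD, rfl⟩
  have hA' : MeasurableSet[(⨆ s, F s) ⊔ MeasurableSpace.comap L inferInstance]
      ((fun ω => (ω, L ω)) ⁻¹' A) := by
    refine (?_ : (MeasurableSpace.comap (fun ω => (ω, L ω)) ((F s).prod inferInstance)) ≤ _) _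
      ⟨A, hA, rfl⟩
    unfold MeasurableSpace.prod
    rw [MeasurableSpace.comap_sup, MeasurableSpace.comap_comp, MeasurableSpace.comap_comp]
    refine sup_le_sup ?_ le_rfl
    have : (Prod.fst ∘ fun ω => (ω, L ω)) = id := rfl
    rw [this, MeasurableSpace.comap_id]
    exact le_iSup (fun s => (F s : MeasurableSpace Ω)) s
  have e : b ∩ ((fun ω => (ω, L ω)) ⁻¹' A ∩ ε t ⁻¹' D) =
      (b ∩ ε t ⁻¹' D) ∩ (fun ω => (ω, L ω)) ⁻¹' A := by
    ext ω; simp only [mem_inter_iff]; tauto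
  rw [e, (Indep_iff _ _ P).1 hε_indep _ _ (MeasurableSet.inter hb' (hεs t _ hDt)) hA',
    (Indep_iff _ _ P).1 (hε_back t t le_rfl) _ _ hb hDt]
  ring

lemma ins_meas_pair {Ω : Type*} {m m' : MeasurableSpace Ω} {f : Ω → ℝ} (h1 : m ≤ m')
    (hf : Measurable[m'] f) :
    @Measurable _ _ m' (m.prod inferInstance) (fun ω => (ω, f ω)) := by
  intro s hs
  have h2 : @Measurable _ _ m' (m'.prod inferInstance) (fun ω => (ω, f ω)) :=
    (@measurable_id _ m').prodMk hf
  exact h2 (ins_prod_le h1 _ hs)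

lemma ins_meas_abs {Ω : Type*} {m : MeasurableSpace Ω} {w : Ω → ℝ} (hw : Measurable w) (C : ℝ) :
    MeasurableSet {u | C < |w u|} := measurableSet_lt measurable_const hw.abs

/-- **Terminal-payoff term in the proof of Theorem 5.1.** Under Jacod's density hypothesis
and the noisy-barrier setup, if `v(·,l)` is, for `P^L`-a.e. `l`, a version of
`E_P[ξ F^M_T(l) | F_t]`, then, `P`-a.s., `E_P[ξ 1_{τ > T} | G^I_t} = (1_{τ > t}/N_t(L_t))
∫ v(·,l) q_t(L_t − l) P^L(dl)` (the right-hand side being `0` on `{τ ≤ t}`, and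
`P(τ > t, N_t(L_t) = 0) = 0`). -/
theorem insider_terminal_payoff_term
    {Ω : Type*} [m0 : MeasurableSpace Ω] {P : Measure Ω} [IsProbabilityMeasure P]
    (F : Filtration ℝ≥0 m0)
    (X : ℝ≥0 → Ω → ℝ) (hX_adapted : Adapted F X)
    (hX_cont : ∀ ω, Continuous fun s => X s ω)
    (L : Ω → ℝ) (hL : Measurable L)
    (hX0 : ∀ᵐ ω ∂P, L ω < X 0 ω)
    (τ : Ω → ℝ≥0)
    (hτ : ∀ (θ : ℝ≥0) (ω : Ω), θ < τ ω ↔ L ω < runInf X θ ω)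
    -- Jacod's density hypothesis
    (p : ℝ≥0 → ℝ → Ω → ℝ)
    (hp_nonneg : ∀ t x ω, 0 ≤ p t x ω)
    (hp_meas : ∀ t, Measurable[(F t).prod inferInstance] fun q : Ω × ℝ => p t q.2 q.1)
    (hp_pos : ∀ t, ∀ᵐ ω ∂P, 0 < p t (L ω) ω)
    (hp_density : ∀ (t : ℝ≥0) (f : ℝ → ℝ), Measurable f → (∃ C, ∀ x, |f x| ≤ C) →
      (P[fun ω => f (L ω)|F t]) =ᵐ[P] fun ω => ∫ x, f x * p t x ω ∂(P.map L))
    -- the noise process: continuous, independent of `F_∞ ∨ σ(L)`, with backwardly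
    -- independent increments, whose marginal laws admit Lebesgue densities `q_t`
    (ε : ℝ≥0 → Ω → ℝ) (hε_meas : ∀ s, Measurable (ε s))
    (hε_cont : ∀ ω, Continuous fun s => ε s ω)
    (hε_indep : Indep (⨆ s, MeasurableSpace.comap (ε s) inferInstance)
      ((⨆ s, F s) ⊔ MeasurableSpace.comap L inferInstance) P)
    (hε_back : ∀ t θ : ℝ≥0, t ≤ θ →
      Indep (⨆ s ∈ Set.Iic t, MeasurableSpace.comap (fun ω => ε s ω - ε t ω) inferInstance)
        (MeasurableSpace.comap (ε θ) inferInstance) P)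
    (q : ℝ≥0 → ℝ → ℝ) (hq_meas : ∀ s, Measurable (q s)) (hq_nonneg : ∀ s x, 0 ≤ q s x)
    (hq_density : ∀ s, P.map (ε s) = volume.withDensity fun x => ENNReal.ofReal (q s x))
    -- times and terminal payoff
    (t T : ℝ≥0) (htT : t ≤ T)
    (ξ : Ω → ℝ) (hξ_meas : Measurable[F T] ξ) (hξ_bdd : ∃ C, ∀ ω, |ξ ω| ≤ C)
    -- the kernel `v`
    (v : Ω × ℝ → ℝ)
    (hv_meas : Measurable[(F t).prod inferInstance] v)
    (hv : ∀ᵐ l ∂(P.map L),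
      (fun ω => v (ω, l)) =ᵐ[P] P[fun ω => ξ ω * FM p X T l ω|F t]) :
    P {ω | t < τ ω ∧ NI P p X L q t (L ω + ε t ω) ω = 0} = 0 ∧
    (P[fun ω => ξ ω * (if T < τ ω then 1 else 0)|insiderFullSigma F L ε τ t]) =ᵐ[P]
      fun ω => if t < τ ω then
        (∫ l, v (ω, l) * q t (L ω + ε t ω - l) ∂(P.map L))
          / NI P p X L q t (L ω + ε t ω) ω
      else 0 := by
  obtain ⟨C, hC⟩ := hξ_bdd
  have hC0 : 0 ≤ C := by
    obtain ⟨ω⟩ : Nonempty Ω := nonempty_of_isProbabilityMeasure P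
    exact (abs_nonneg _).trans (hC ω)
  set μ : Measure ℝ := P.map L with hμ
  have hμp : IsProbabilityMeasure μ := Measure.isProbabilityMeasure_map hL.aemeasurable
  have hFle : ∀ s, F s ≤ m0 := F.le
  have hr : ∀ s, Measurable[F s] (runInf X s) := fun s =>
    ins_runInf_meas (m := F s) X s (fun u hu => (hX_adapted u).mono (F.mono hu) le_rfl) hX_cont
  have hr0 : ∀ s, Measurable (runInf X s) := fun s => (hr s).mono (hFle s) le_rfl
  have hp0m : ∀ s, Measurable fun y : Ω × ℝ => p s y.2 y.1 := fun s =>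
    (hp_meas s).mono (ins_prod_le (hFle s)) le_rfl
  have hfm : ∀ s, Measurable[(F s).prod inferInstance] fun y : Ω × ℝ => FM p X s y.2 y.1 :=
    fun s => ins_meas_FM (m := F s) p X s (hr s) (hp_meas s)
  have hfm0 : ∀ s, Measurable fun y : Ω × ℝ => FM p X s y.2 y.1 := fun s =>
    (hfm s).mono (ins_prod_le (hFle s)) le_rfl
  have hFM0 : ∀ s l ω, 0 ≤ FM p X s l ω := fun s l ω => by
    unfold FM; exact mul_nonneg (hp_nonneg _ _ _) (by split_ifs <;> simp)
  have hFMp : ∀ s l ω, FM p X s l ω ≤ p s l ω := fun s l ω => by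
    unfold FM; split_ifs <;> simp [hp_nonneg]
  have hJ : ∀ s, ∀ h : Ω × ℝ → ENNReal, Measurable[(F s).prod inferInstance] h →
      ∫⁻ ω, h (ω, L ω) ∂P = ∫⁻ y, h y * ENNReal.ofReal (p s y.2 y.1) ∂(P.prod μ) := fun s =>
    ins_J (hFle s) hL (p s) (hp_nonneg s) (hp_meas s) (hp_density s)
  let ρ : ℝ≥0 → (Ω × ℝ) × ℝ → ℝ := fun s y => p s y.2 y.1.1 * q t (y.1.2 - y.2)
  have hρm : ∀ s, Measurable (ρ s) := fun s =>
    ((hp0m s).comp (g := fun y : Ω × ℝ => p s y.2 y.1) (f := fun y : (Ω × ℝ) × ℝ => (y.1.1, y.2)) (by fun_prop)).mul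
      ((hq_meas t).comp (by fun_prop))
  have hρ0 : ∀ s y, 0 ≤ ρ s y := fun s y => mul_nonneg (hp_nonneg _ _ _) (hq_nonneg _ _)
  -- joint law
  have hlaw : ∀ s b, MeasurableSet[⨆ s ∈ Set.Iic t,
      MeasurableSpace.comap (fun ω => ε s ω - ε t ω) inferInstance] b →
      ∀ h : (Ω × ℝ) × ℝ → ENNReal,
      Measurable[((F s).prod inferInstance).prod inferInstance] h →
      ∫⁻ ω in b, h ((ω, L ω + ε t ω), L ω) ∂P =
        P b * ∫⁻ y, h y * ENNReal.ofReal (ρ s y) ∂((P.prod volume).prod μ) := by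
    intro s b hb h hh
    have hb0 : MeasurableSet b := by
      refine (iSup₂_le fun s hs => ?_ : (⨆ s ∈ Set.Iic t,
        MeasurableSpace.comap (fun ω => ε s ω - ε t ω) inferInstance) ≤ _) _ hb
      rw [← measurable_iff_comap_le]
      exact (hε_meas s).sub (hε_meas t)
    have := @ins_law Ω Ω m0 (F s) P _ id (measurable_id'' (hFle s)) L (ε t) hL (hε_meas t) b hb0
      (fun y => ENNReal.ofReal (p s y.2 y.1)) (ENNReal.measurable_ofReal.comp (hp_meas s))
      (fun x => ENNReal.ofReal (q t x)) (ENNReal.measurable_ofReal.comp (hq_meas t))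
      (hJ s) (fun A D hA hD => ins_indep F L ε hε_indep hε_back s t b hb A D hA hD)
      (hq_density t) h hh
    rw [show (∫⁻ ω in b, h ((ω, L ω + ε t ω), L ω) ∂P) =
      ∫⁻ ω in b, h ((id ω, L ω + ε t ω), L ω) ∂P from rfl, this]
    congr 1
    refine lintegral_congr fun y => ?_
    simp only [ρ, id, ENNReal.ofReal_mul (hp_nonneg _ _ _)]
  have hlawR : ∀ s b, MeasurableSet[⨆ s ∈ Set.Iic t,
      MeasurableSpace.comap (fun ω => ε s ω - ε t ω) inferInstance] b →
      ∀ h : (Ω × ℝ) × ℝ → ℝ,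
      Measurable[((F s).prod inferInstance).prod inferInstance] h →
      ∫ ω in b, h ((ω, L ω + ε t ω), L ω) ∂P =
        (P b).toReal * ∫ y, h y * ρ s y ∂((P.prod volume).prod μ) := by
    intro s b hb h hh
    exact @ins_law_int Ω Ω m0 (F s) P _ id (measurable_id'' (hFle s)) L (ε t) hL (hε_meas t) b
      (ρ s) (hρm s) (hρ0 s) (hlaw s b hb) h hh
  have hlaw1 : ∀ s, ∀ h : (Ω × ℝ) × ℝ → ENNReal,
      Measurable[((F s).prod inferInstance).prod inferInstance] h →
      ∫⁻ ω, h ((ω, L ω + ε t ω), L ω) ∂P =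
        ∫⁻ y, h y * ENNReal.ofReal (ρ s y) ∂((P.prod volume).prod μ) := by
    intro s h hh
    have := hlaw s univ (@MeasurableSet.univ _ _) h hh
    simpa using this
  -- integrability
  have hρi : ∀ s, Integrable (ρ s) ((P.prod volume).prod μ) := by
    intro s
    refine ⟨(hρm s).aestronglyMeasurable, ?_⟩
    rw [hasFiniteIntegral_iff_ofReal (ae_of_all _ (hρ0 s))]
    have := hlaw1 s (fun _ => 1) measurable_const
    simp only [one_mul, lintegral_const, measure_univ] at this
    rw [← this]
    simp
  have hpi : ∀ s, Integrable (fun y : Ω × ℝ => p s y.2 y.1) (P.prod μ) := by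
    intro s
    refine ⟨(hp0m s).aestronglyMeasurable, ?_⟩
    rw [hasFiniteIntegral_iff_ofReal (ae_of_all _ fun y => hp_nonneg _ _ _)]
    have := hJ s (fun _ => 1) measurable_const
    simp only [one_mul, lintegral_const, measure_univ] at this
    rw [← this]
    simp
  have hfi : ∀ s, Integrable (fun y : Ω × ℝ => FM p X s y.2 y.1) (P.prod μ) := by
    intro s
    refine (hpi s).mono' (hfm0 s).aestronglyMeasurable (ae_of_all _ fun y => ?_)
    rw [Real.norm_of_nonneg (hFM0 _ _ _)]
    exact hFMp _ _ _
  have hproj : Measurable fun y : (Ω × ℝ) × ℝ => (y.1.1, y.2) := by fun_prop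
  have hqm : Measurable fun y : (Ω × ℝ) × ℝ => q t (y.1.2 - y.2) := (hq_meas t).comp (by fun_prop)
  have hfqm : ∀ s, Measurable fun y : (Ω × ℝ) × ℝ => FM p X s y.2 y.1.1 * q t (y.1.2 - y.2) :=
    fun s => ((hfm0 s).comp (g := fun y : Ω × ℝ => FM p X s y.2 y.1) hproj).mul hqm
  have hfqi : ∀ s, Integrable (fun y : (Ω × ℝ) × ℝ => FM p X s y.2 y.1.1 * q t (y.1.2 - y.2))
      ((P.prod volume).prod μ) := by
    intro s
    refine (hρi s).mono' (hfqm s).aestronglyMeasurable (ae_of_all _ fun y => ?_)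
    rw [Real.norm_of_nonneg (mul_nonneg (hFM0 _ _ _) (hq_nonneg _ _))]
    exact mul_le_mul_of_nonneg_right (hFMp _ _ _) (hq_nonneg _ _)
  have hξ0 : Measurable ξ := hξ_meas.mono (hFle T) le_rfl
  -- domination of `v`
  let g : Ω × ℝ → ℝ := fun y => ξ y.1 * FM p X T y.2 y.1
  have hgm : Measurable g := (hξ0.comp measurable_fst).mul (hfm0 T)
  have hgi : Integrable g (P.prod μ) := by
    refine ((hfi T).const_mul C).mono' hgm.aestronglyMeasurable (ae_of_all _ fun y => ?_)
    simp only [g, norm_mul, Real.norm_eq_abs, abs_of_nonneg (hFM0 _ _ _)]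
    exact mul_le_mul_of_nonneg_right (hC _) (hFM0 _ _ _)
  have hv' : ∀ᵐ l ∂μ, (fun ω => v (ω, l)) =ᵐ[P] P[fun ω => g (ω, l)|F t] := hv
  have hFMset : ∀ s, t ≤ s → ∀ S, MeasurableSet[(F t).prod inferInstance] S →
      ∫ y in S, FM p X s y.2 y.1 ∂(P.prod μ) =
        (P {ω | (ω, L ω) ∈ S ∧ L ω < runInf X s ω}).toReal := by
    intro s hs S hS
    have hSs : MeasurableSet[(F s).prod inferInstance] S := ins_prod_le (F.mono hs) _ hS
    have hS0 : MeasurableSet S := ins_prod_le (hFle t) _ hS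
    have hR : MeasurableSet[(F s).prod inferInstance] {y : Ω × ℝ | y ∈ S ∧ y.2 < runInf X s y.1} :=
      MeasurableSet.inter hSs (measurableSet_lt (@measurable_snd _ _ (F s) _)
        ((hr s).comp (@measurable_fst _ _ (F s) _)))
    have hR0 := ins_prod_le (hFle s) _ hR
    have h1 := hJ s ({y : Ω × ℝ | y ∈ S ∧ y.2 < runInf X s y.1}.indicator fun _ => 1)
      (measurable_const.indicator hR)
    have h2 : ∫⁻ ω, ({y : Ω × ℝ | y ∈ S ∧ y.2 < runInf X s y.1}.indicator
        (fun _ => (1 : ENNReal))) (ω, L ω) ∂P = P {ω | (ω, L ω) ∈ S ∧ L ω < runInf X s ω} := by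
      have hmm : MeasurableSet {ω | (ω, L ω) ∈ S ∧ L ω < runInf X s ω} :=
        (measurable_id.prodMk hL) hR0
      rw [← lintegral_indicator_one hmm]
      rfl
    rw [← h2, h1, integral_eq_lintegral_of_nonneg_ae (ae_of_all _ fun y => hFM0 _ _ _)
      (hfm0 s).aestronglyMeasurable, ← lintegral_indicator hS0]
    congr 1
    refine lintegral_congr fun y => ?_
    by_cases h1 : y ∈ S <;> by_cases h2 : y.2 < runInf X s y.1 <;> simp [h1, h2, FM]
  have hFMle : ∀ S, MeasurableSet[(F t).prod inferInstance] S →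
      ∫ y in S, FM p X T y.2 y.1 ∂(P.prod μ) ≤ ∫ y in S, FM p X t y.2 y.1 ∂(P.prod μ) := by
    intro S hS
    rw [hFMset T htT S hS, hFMset t le_rfl S hS]
    refine ENNReal.toReal_mono (measure_ne_top _ _) (measure_mono ?_)
    rintro ω ⟨h1, h2⟩
    exact ⟨h1, h2.trans_le (ins_runInf_anti X htT hX_cont ω)⟩
  have hbd : ∀ᵐ y ∂(P.prod μ), |v y| ≤ C * FM p X t y.2 y.1 := by
    have hcm : Measurable[(F t).prod inferInstance] fun y : Ω × ℝ => C * FM p X t y.2 y.1 :=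
      (hfm t).const_mul C
    have hup := ins_v_le (hFle t) hgi hv_meas hv' hcm ((hfi t).const_mul C) (by
      intro S hS
      rw [integral_const_mul]
      refine le_trans ?_ (mul_le_mul_of_nonneg_left (hFMle S hS) hC0)
      rw [← integral_const_mul]
      refine integral_mono hgi.integrableOn ((hfi T).const_mul C).integrableOn fun y => ?_
      exact mul_le_mul_of_nonneg_right (le_of_abs_le (hC _)) (hFM0 _ _ _))
    have hlo := ins_v_le (g := fun y => -g y) (v := fun y => -v y) (hFle t) hgi.neg hv_meas.neg
      (by
        filter_upwards [hv'] with l hl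
        have h2 : P[fun ω => -g (ω, l)|F t] =ᵐ[P] -P[fun ω => g (ω, l)|F t] :=
          condExp_neg (fun ω => g (ω, l)) (F t)
        filter_upwards [hl, h2] with ω h3 h4
        rw [h4, Pi.neg_apply, ← h3]) hcm ((hfi t).const_mul C) (by
      intro S hS
      rw [integral_const_mul]
      refine le_trans ?_ (mul_le_mul_of_nonneg_left (hFMle S hS) hC0)
      rw [← integral_const_mul]
      refine integral_mono hgi.neg.integrableOn ((hfi T).const_mul C).integrableOn fun y => ?_
      have := mul_le_mul_of_nonneg_right (neg_le_of_abs_le (hC y.1)) (hFM0 T y.2 y.1)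
      simp only [Pi.neg_apply, g]
      linarith)
    filter_upwards [hup, hlo] with y h1 h2
    exact abs_le.2 ⟨by linarith, h1⟩
  have hvm0 : Measurable v := hv_meas.mono (ins_prod_le (hFle t)) le_rfl
  have hvqm : Measurable fun y : (Ω × ℝ) × ℝ => v (y.1.1, y.2) * q t (y.1.2 - y.2) :=
    (hvm0.comp hproj).mul hqm
  have hbd1 : ∀ᵐ u ∂(P.prod (volume : Measure ℝ)), ∀ᵐ l ∂μ, |v (u.1, l)| ≤ C * FM p X t l u.1 :=
    Measure.quasiMeasurePreserving_fst.ae (Measure.ae_ae_of_ae_prod hbd)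
  have hbd2 : ∀ᵐ y ∂((P.prod (volume : Measure ℝ)).prod μ),
      |v (y.1.1, y.2)| ≤ C * FM p X t y.2 y.1.1 := by
    rw [Measure.ae_prod_iff_ae_ae]
    · exact hbd1
    · exact measurableSet_le (hvm0.comp hproj).abs
        (((hfm0 t).comp (g := fun y : Ω × ℝ => FM p X t y.2 y.1) hproj).const_mul C)
  have hvqi : Integrable (fun y : (Ω × ℝ) × ℝ => v (y.1.1, y.2) * q t (y.1.2 - y.2))
      ((P.prod volume).prod μ) := by
    refine ((hfqi t).const_mul C).mono' hvqm.aestronglyMeasurable ?_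
    filter_upwards [hbd2] with y hy
    rw [norm_mul, Real.norm_eq_abs, Real.norm_of_nonneg (hq_nonneg _ _), ← mul_assoc]
    exact mul_le_mul_of_nonneg_right hy (hq_nonneg _ _)
  have hgqi : Integrable (fun y : (Ω × ℝ) × ℝ => g (y.1.1, y.2) * q t (y.1.2 - y.2))
      ((P.prod volume).prod μ) := by
    refine ((hfqi T).const_mul C).mono' ((hgm.comp hproj).mul hqm).aestronglyMeasurable
      (ae_of_all _ fun y => ?_)
    simp only [norm_mul, Real.norm_eq_abs, abs_of_nonneg (hq_nonneg _ _), ← mul_assoc, g,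
      abs_of_nonneg (hFM0 _ _ _)]
    exact mul_le_mul_of_nonneg_right (mul_le_mul_of_nonneg_right (hC _) (hFM0 _ _ _))
      (hq_nonneg _ _)
  -- numerator and denominator
  let V : Ω × ℝ → ℝ := fun u => ∫ l, v (u.1, l) * q t (u.2 - l) ∂μ
  let N : Ω × ℝ → ℝ := fun u => ∫ l, FM p X t l u.1 * q t (u.2 - l) ∂μ
  have hVm : Measurable[(F t).prod inferInstance] V := ins_meas_conv (m := F t) hv_meas (hq_meas t)
  have hNm : Measurable[(F t).prod inferInstance] N :=
    ins_meas_conv (m := F t) (hfm t) (hq_meas t)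
  have hVNm : Measurable[(F t).prod inferInstance] fun u => V u / N u := hVm.div hNm
  have hVNm0 : Measurable fun u => V u / N u := hVNm.mono (ins_prod_le (hFle t)) le_rfl
  have hNI : ∀ u : Ω × ℝ, NI P p X L q t u.2 u.1 = N u := fun u => rfl
  have hVN : ∀ᵐ u ∂(P.prod (volume : Measure ℝ)),
      Integrable (fun l => FM p X t l u.1 * q t (u.2 - l)) μ ∧ |V u| ≤ C * N u := by
    filter_upwards [hbd1, (hfqi t).prod_right_ae] with u h1 h2
    refine ⟨h2, ?_⟩
    simp only [V, N]
    rw [← integral_const_mul, ← Real.norm_eq_abs]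
    refine norm_integral_le_of_norm_le (h2.const_mul C) ?_
    filter_upwards [h1] with l hl
    rw [norm_mul, Real.norm_eq_abs, Real.norm_of_nonneg (hq_nonneg _ _), ← mul_assoc]
    exact mul_le_mul_of_nonneg_right hl (hq_nonneg _ _)
  have hN0 : ∀ u, 0 ≤ N u := fun u => integral_nonneg fun l =>
    mul_nonneg (hFM0 _ _ _) (hq_nonneg _ _)
  have hVN1 : ∀ᵐ u ∂(P.prod (volume : Measure ℝ)), |V u / N u| ≤ C ∧ V u / N u * N u = V u := by
    filter_upwards [hVN] with u ⟨_, h⟩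
    rcases (hN0 u).eq_or_lt with h0 | h0
    · rw [← h0] at h ⊢
      have : V u = 0 := by simpa using h
      simp [this, hC0]
    · refine ⟨?_, div_mul_cancel₀ _ h0.ne'⟩
      rw [abs_div, abs_of_pos h0, div_le_iff₀ h0]
      exact h
  have hi1 : @Measurable ((Ω × ℝ) × ℝ) (Ω × ℝ) (((F t).prod inferInstance).prod inferInstance)
      ((F t).prod inferInstance) (fun y => y.1) :=
    @measurable_fst _ _ ((F t).prod inferInstance) _
  have hlt : ∀ s, Measurable[((F s).prod inferInstance).prod inferInstance]
      fun y : (Ω × ℝ) × ℝ => (if y.2 < runInf X s y.1.1 then (1 : ℝ) else 0) := fun s =>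
    ins_meas_lt (m := (F s).prod inferInstance)
      ((hr s).comp (@measurable_fst _ _ (F s) _))
  refine ⟨?_, ?_⟩
  · have hS : MeasurableSet[((F t).prod inferInstance).prod inferInstance]
        {y : (Ω × ℝ) × ℝ | (y.2 < runInf X t y.1.1) ∧ N y.1 = 0} :=
      MeasurableSet.inter
        (measurableSet_lt (@measurable_snd _ _ ((F t).prod inferInstance) _)
          ((hr t).comp ((@measurable_fst _ _ (F t) _).comp hi1)))
        ((hNm.comp hi1) (measurableSet_singleton 0))
    have h1 := hlaw1 t ({y : (Ω × ℝ) × ℝ | (y.2 < runInf X t y.1.1) ∧ N y.1 = 0}.indicator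
      fun _ => 1) (measurable_const.indicator hS)
    have hS0 : MeasurableSet {y : (Ω × ℝ) × ℝ | (y.2 < runInf X t y.1.1) ∧ N y.1 = 0} :=
      ins_prod_le (ins_prod_le (hFle t)) _ hS
    have hSω : MeasurableSet {ω | t < τ ω ∧ NI P p X L q t (L ω + ε t ω) ω = 0} := by
      have : Measurable fun ω => ((ω, L ω + ε t ω), L ω) :=
        (measurable_id.prodMk (hL.add (hε_meas t))).prodMk hL
      have h2 := this hS0
      convert h2 using 1
      ext ω
      simp only [mem_ofPred_eq, mem_preimage, hτ]
      rfl
    rw [← lintegral_indicator_one hSω]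
    have e : ∀ ω, {ω | t < τ ω ∧ NI P p X L q t (L ω + ε t ω) ω = 0}.indicator
        (1 : Ω → ENNReal) ω = {y : (Ω × ℝ) × ℝ | (y.2 < runInf X t y.1.1) ∧ N y.1 = 0}.indicator
        (fun _ => 1) ((ω, L ω + ε t ω), L ω) := by
      intro ω
      simp only [indicator, mem_ofPred_eq, hτ]
      rfl
    have hmm : Measurable fun y : (Ω × ℝ) × ℝ =>
        {y : (Ω × ℝ) × ℝ | (y.2 < runInf X t y.1.1) ∧ N y.1 = 0}.indicator
          (fun _ => (1 : ENNReal)) y * ENNReal.ofReal (ρ t y) :=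
      (measurable_const.indicator hS0).mul (hρm t).ennreal_ofReal
    rw [lintegral_congr e, h1, lintegral_prod _ hmm.aemeasurable]
    refine lintegral_eq_zero_of_ae_eq_zero ?_
    filter_upwards [hVN] with u ⟨hu, _⟩
    refine lintegral_eq_zero_of_ae_eq_zero ?_
    by_cases h0 : N u = 0
    · have h3 := (integral_eq_zero_iff_of_nonneg
        (fun l => mul_nonneg (hFM0 t l u.1) (hq_nonneg t (u.2 - l))) hu).1 h0
      filter_upwards [h3] with l hl
      by_cases h4 : l < runInf X t u.1
      · have : ρ t (u, l) = 0 := by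
          simpa [FM, h4, ρ] using hl
        simp [this]
      · simp [h4]
    · exact ae_of_all _ fun l => by simp [h0]
  · -- the right-hand side
    let G : Ω → ℝ := fun ω => if t < τ ω then V (ω, L ω + ε t ω) / N (ω, L ω + ε t ω) else 0
    let f : Ω → ℝ := fun ω => ξ ω * (if T < τ ω then 1 else 0)
    change (P[f|insiderFullSigma F L ε τ t]) =ᵐ[P] G
    have hτm : ∀ s, MeasurableSet {ω | s < τ ω} := by
      intro s
      have : {ω | s < τ ω} = {ω | L ω < runInf X s ω} := by ext ω; simp [hτ]
      rw [this]
      exact measurableSet_lt hL (hr0 s)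
    have hGle : insiderFullSigma F L ε τ t ≤ m0 := by
      refine sup_le (sup_le (hFle t) (iSup₂_le fun s _ => ?_)) ?_
      · rw [← measurable_iff_comap_le]
        exact hL.add (hε_meas s)
      · refine MeasurableSpace.generateFrom_le ?_
        rintro _ ⟨s, _, rfl⟩
        have : {ω | τ ω ≤ s} = {ω | s < τ ω}ᶜ := by ext ω; simp
        rw [this]
        exact (hτm s).compl
    have hGm : Measurable[insiderFullSigma F L ε τ t] G := by
      have j1 : MeasurableSet[insiderFullSigma F L ε τ t] {ω | t < τ ω} := by
        have : {ω | t < τ ω} = {ω | τ ω ≤ t}ᶜ := by ext ω; simp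
        rw [this]
        refine MeasurableSet.compl ?_
        exact (le_sup_right : defaultSigma τ t ≤ insiderFullSigma F L ε τ t) _
          (MeasurableSpace.measurableSet_generateFrom ⟨t, le_rfl, rfl⟩)
      have j3 : Measurable[insiderFullSigma F L ε τ t] fun ω => L ω + ε t ω := by
        rw [measurable_iff_comap_le]
        exact le_sup_of_le_left (le_sup_of_le_right (le_iSup₂ (f := fun s (_ : s ∈ Set.Iic t) =>
          MeasurableSpace.comap (fun ω => L ω + ε s ω) inferInstance) t (mem_Iic.2 le_rfl)))
      have j4 : @Measurable _ _ (insiderFullSigma F L ε τ t) ((F t).prod inferInstance)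
          (fun ω => (ω, L ω + ε t ω)) :=
        ins_meas_pair (le_sup_of_le_left le_sup_left) j3
      exact Measurable.ite j1 (hVNm.comp j4) measurable_const
    have hGm0 : Measurable G := hGm.mono hGle le_rfl
    have hGb : ∀ᵐ ω ∂P, ‖G ω‖ ≤ C := by
      have hS : MeasurableSet[(F t).prod inferInstance] {u : Ω × ℝ | C < |V u / N u|} :=
        ins_meas_abs (m := (F t).prod inferInstance) hVNm C
      have hS0 := ins_prod_le (hFle t) _ hS
      have h1 := hlaw1 t (fun y => {u : Ω × ℝ | C < |V u / N u|}.indicator (fun _ => 1) y.1)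
        ((measurable_const.indicator hS).comp hi1)
      have hm1 : Measurable fun y : (Ω × ℝ) × ℝ =>
          {u : Ω × ℝ | C < |V u / N u|}.indicator (fun _ => (1 : ENNReal)) y.1 :=
        (measurable_const.indicator hS0).comp measurable_fst
      have h2 : ∫⁻ y, {u : Ω × ℝ | C < |V u / N u|}.indicator (fun _ => (1 : ENNReal)) y.1 *
          ENNReal.ofReal (ρ t y) ∂((P.prod volume).prod μ) = 0 := by
        have hmm : Measurable fun y : (Ω × ℝ) × ℝ =>
            {u : Ω × ℝ | C < |V u / N u|}.indicator (fun _ => (1 : ENNReal)) y.1 *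
              ENNReal.ofReal (ρ t y) := hm1.mul (hρm t).ennreal_ofReal
        rw [lintegral_prod _ hmm.aemeasurable]
        refine lintegral_eq_zero_of_ae_eq_zero ?_
        filter_upwards [hVN1] with u ⟨hu, _⟩
        simp [not_lt.2 hu]
      have hm2 : Measurable fun ω =>
          {u : Ω × ℝ | C < |V u / N u|}.indicator (fun _ => (1 : ENNReal)) (ω, L ω + ε t ω) :=
        (measurable_const.indicator hS0).comp (measurable_id.prodMk (hL.add (hε_meas t)))
      rw [h2] at h1
      have h3 := (lintegral_eq_zero_iff hm2).1 h1
      filter_upwards [h3] with ω hω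
      simp only [G]
      split_ifs
      · by_contra hc
        have hmem : (ω, L ω + ε t ω) ∈ {u : Ω × ℝ | C < |V u / N u|} := by
          exact not_le.1 hc
        rw [Pi.zero_apply, indicator_of_mem hmem] at hω
        exact one_ne_zero hω
      · simpa using hC0
    have hGi : Integrable G P := Integrable.of_bound hGm0.aestronglyMeasurable C hGb
    have hfm1 : Measurable f := hξ0.mul (Measurable.ite (hτm T) measurable_const measurable_const)
    have hfi1 : Integrable f P := by
      refine Integrable.of_bound hfm1.aestronglyMeasurable C (ae_of_all _ fun ω => ?_)
      simp only [f]
      split_ifs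
      · simpa using hC ω
      · simpa using hC0
    have hLt : Measurable fun ω => L ω + ε t ω := hL.add (hε_meas t)
    have hBle : (⨆ s ∈ Set.Iic t,
        MeasurableSpace.comap (fun ω => ε s ω - ε t ω) inferInstance) ≤ m0 := by
      refine iSup₂_le fun s _ => ?_
      rw [← measurable_iff_comap_le]
      exact (hε_meas s).sub (hε_meas t)
    have hrectEq : ∀ a c b, MeasurableSet[F t] a →
        MeasurableSet[MeasurableSpace.comap (fun ω => L ω + ε t ω) inferInstance] c →
        MeasurableSet[⨆ s ∈ Set.Iic t,
          MeasurableSpace.comap (fun ω => ε s ω - ε t ω) inferInstance] b →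
        ∫ ω in a ∩ c ∩ b, G ω ∂P = ∫ ω in a ∩ c ∩ b, f ω ∂P := by
      rintro a _ b ha ⟨D, hD, rfl⟩ hb
      have ha0 := hFle t _ ha
      have hac : MeasurableSet (a ∩ (fun ω => L ω + ε t ω) ⁻¹' D) := ha0.inter (hLt hD)
      have hset : ∀ w : Ω → ℝ, ∫ ω in a ∩ (fun ω => L ω + ε t ω) ⁻¹' D ∩ b, w ω ∂P =
          ∫ ω in b, a.indicator 1 ω * D.indicator 1 (L ω + ε t ω) * w ω ∂P := by
        intro w
        rw [inter_comm, ← setIntegral_indicator hac]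
        congr 1
        ext ω
        by_cases h1 : ω ∈ a <;> by_cases h2 : L ω + ε t ω ∈ D <;> simp [indicator, h1, h2]
      -- measurability of the weights
      have hwm : ∀ s, t ≤ s → Measurable[((F s).prod inferInstance).prod inferInstance]
          fun y : (Ω × ℝ) × ℝ => a.indicator (1 : Ω → ℝ) y.1.1 * D.indicator (1 : ℝ → ℝ) y.1.2 := by
        intro s hs
        have i1 : Measurable[F s] (a.indicator (1 : Ω → ℝ)) :=
          measurable_const.indicator (F.mono hs _ ha)
        have i2 : Measurable (D.indicator (1 : ℝ → ℝ)) := measurable_const.indicator hD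
        exact ((i1.comp (@measurable_fst _ _ (F s) _)).mul
          (i2.comp (@measurable_snd _ _ (F s) _))).comp
          (@measurable_fst _ _ ((F s).prod inferInstance) _)
      have hwm0 : Measurable fun y : (Ω × ℝ) × ℝ =>
          a.indicator (1 : Ω → ℝ) y.1.1 * D.indicator (1 : ℝ → ℝ) y.1.2 :=
        (hwm t le_rfl).mono (ins_prod_le (ins_prod_le (hFle t))) le_rfl
      have hwb : ∀ y : (Ω × ℝ) × ℝ,
          ‖a.indicator (1 : Ω → ℝ) y.1.1 * D.indicator (1 : ℝ → ℝ) y.1.2‖ ≤ 1 := by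
        intro y
        by_cases h1 : y.1.1 ∈ a <;> by_cases h2 : y.1.2 ∈ D <;> simp [h1, h2]
      have hR : ∫ ω in a ∩ (fun ω => L ω + ε t ω) ⁻¹' D ∩ b, f ω ∂P = (P b).toReal *
          ∫ y, a.indicator 1 y.1.1 * (D.indicator 1 y.1.2 * q t (y.1.2 - y.2)) * g (y.1.1, y.2)
            ∂((P.prod volume).prod μ) := by
        rw [hset]
        have hξT : Measurable[((F T).prod inferInstance).prod inferInstance]
            fun y : (Ω × ℝ) × ℝ => ξ y.1.1 :=
          (hξ_meas.comp (@measurable_fst _ _ (F T) _)).comp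
            (@measurable_fst _ _ ((F T).prod inferInstance) _)
        have := hlawR T b hb (fun y => a.indicator (1 : Ω → ℝ) y.1.1 * D.indicator (1 : ℝ → ℝ) y.1.2
          * (ξ y.1.1 * (if y.2 < runInf X T y.1.1 then (1 : ℝ) else 0)))
          ((hwm T htT).mul (hξT.mul (hlt T)))
        simp only [f, hτ]
        rw [this]
        congr 1
        refine integral_congr_ae (ae_of_all _ fun y => ?_)
        simp only [ρ, g, FM]
        ring
      have hLft : ∫ ω in a ∩ (fun ω => L ω + ε t ω) ⁻¹' D ∩ b, G ω ∂P = (P b).toReal *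
          ∫ y, a.indicator 1 y.1.1 * (D.indicator 1 y.1.2 * q t (y.1.2 - y.2)) * v (y.1.1, y.2)
            ∂((P.prod volume).prod μ) := by
        rw [hset]
        have := hlawR t b hb (fun y => a.indicator (1 : Ω → ℝ) y.1.1 * D.indicator (1 : ℝ → ℝ) y.1.2
          * ((if y.2 < runInf X t y.1.1 then (1 : ℝ) else 0) * (V y.1 / N y.1)))
          ((hwm t le_rfl).mul ((hlt t).mul (hVNm.comp hi1)))
        have e : ∀ ω, G ω = (if L ω < runInf X t ω then (1 : ℝ) else 0) *
            (V (ω, L ω + ε t ω) / N (ω, L ω + ε t ω)) := by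
          intro ω
          simp only [G, hτ, ite_mul, one_mul, zero_mul]
        simp only [e]
        rw [this]
        congr 1
        have e1 : ∀ y : (Ω × ℝ) × ℝ,
            a.indicator (1 : Ω → ℝ) y.1.1 * D.indicator (1 : ℝ → ℝ) y.1.2
            * ((if y.2 < runInf X t y.1.1 then (1 : ℝ) else 0) * (V y.1 / N y.1)) * ρ t y =
            (a.indicator (1 : Ω → ℝ) y.1.1 * D.indicator (1 : ℝ → ℝ) y.1.2 * (V y.1 / N y.1)) *
              (FM p X t y.2 y.1.1 * q t (y.1.2 - y.2)) := by
          intro y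
          simp only [ρ, FM]
          ring
        have e2 : ∀ y : (Ω × ℝ) × ℝ,
            a.indicator (1 : Ω → ℝ) y.1.1 * (D.indicator (1 : ℝ → ℝ) y.1.2 * q t (y.1.2 - y.2)) *
              v (y.1.1, y.2) =
            a.indicator (1 : Ω → ℝ) y.1.1 * D.indicator (1 : ℝ → ℝ) y.1.2 *
              (v (y.1.1, y.2) * q t (y.1.2 - y.2)) := by
          intro y; ring
        simp only [e1, e2]
        have hVN2 : ∀ᵐ y ∂((P.prod (volume : Measure ℝ)).prod μ), |V y.1 / N y.1| ≤ C :=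
          Measure.quasiMeasurePreserving_fst.ae (hVN1.mono fun u hu => hu.1)
        have k1 : Integrable (fun y : (Ω × ℝ) × ℝ =>
            (a.indicator (1 : Ω → ℝ) y.1.1 * D.indicator (1 : ℝ → ℝ) y.1.2 * (V y.1 / N y.1)) *
              (FM p X t y.2 y.1.1 * q t (y.1.2 - y.2))) ((P.prod volume).prod μ) := by
          refine (hfqi t).bdd_mul (c := C)
            (hwm0.mul (hVNm0.comp measurable_fst)).aestronglyMeasurable ?_
          filter_upwards [hVN2] with y hy
          rw [norm_mul]
          calc _ ≤ 1 * C := mul_le_mul (hwb y) hy (abs_nonneg _) zero_le_one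
            _ = C := one_mul C
        have k2 : Integrable (fun y : (Ω × ℝ) × ℝ =>
            a.indicator (1 : Ω → ℝ) y.1.1 * D.indicator (1 : ℝ → ℝ) y.1.2 *
              (v (y.1.1, y.2) * q t (y.1.2 - y.2))) ((P.prod volume).prod μ) :=
          hvqi.bdd_mul (c := 1) hwm0.aestronglyMeasurable (ae_of_all _ hwb)
        rw [integral_prod _ k1, integral_prod _ k2]
        refine integral_congr_ae ?_
        filter_upwards [hVN1] with u ⟨_, hu⟩
        simp only [integral_const_mul]
        rw [mul_assoc _ (V u / N u)]
        congr 1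
      rw [hR, hLft]
      congr 1
      have e3 : ∀ w : Ω × ℝ → ℝ, (fun y : (Ω × ℝ) × ℝ =>
          a.indicator (1 : Ω → ℝ) y.1.1 * (D.indicator (1 : ℝ → ℝ) y.1.2 * q t (y.1.2 - y.2)) *
            w (y.1.1, y.2)) = fun y => a.indicator (1 : Ω → ℝ) y.1.1 * D.indicator (1 : ℝ → ℝ) y.1.2 *
              (w (y.1.1, y.2) * q t (y.1.2 - y.2)) := by
        intro w; ext y; ring
      refine ins_reorder_eq (hFle t) hgi hv' a ha
        (fun x l => D.indicator 1 x * q t (x - l)) ?_ ?_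
      · rw [e3]
        exact hvqi.bdd_mul (c := 1) hwm0.aestronglyMeasurable (ae_of_all _ hwb)
      · rw [e3]
        exact hgqi.bdd_mul (c := 1) hwm0.aestronglyMeasurable (ae_of_all _ hwb)
    symm
    refine ae_eq_condExp_of_forall_setIntegral_eq hGle hfi1 (fun s _ _ => hGi.integrableOn) ?_
      hGm.stronglyMeasurable.aestronglyMeasurable
    intro A hA _
    obtain ⟨A', hA', hAA⟩ := ins_trace F L ε τ t A hA
    have hA0 := hGle _ hA
    have hA0' : MeasurableSet A' := by
      refine (sup_le (sup_le (hFle t) ?_) hBle : _ ≤ m0) _ hA'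
      rw [← measurable_iff_comap_le]
      exact hLt
    have htr : ∀ w : Ω → ℝ, (∀ ω, ¬ t < τ ω → w ω = 0) →
        ∫ ω in A, w ω ∂P = ∫ ω in A', w ω ∂P := by
      intro w hw
      rw [← integral_indicator hA0, ← integral_indicator hA0']
      congr 1
      ext ω
      by_cases h : t < τ ω
      · have := Set.ext_iff.1 hAA ω
        simp only [mem_inter_iff, mem_ofPred_eq, h, and_true] at this
        by_cases h2 : ω ∈ A
        · simp [h2, this.1 h2]
        · have h3 : ω ∉ A' := fun h3 => h2 (this.2 h3)
          simp [h2, h3]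
      · simp [indicator, hw ω h]
    rw [htr G fun ω h => by simp [G, h], htr f fun ω h => by
      have : ¬ T < τ ω := fun h2 => h (htT.trans_lt h2)
      simp [f, this]]
    refine ins_ind (hFle t) ?_ hBle hGi hfi1 hrectEq A' hA'
    rw [← measurable_iff_comap_le]
    exact hLt
end
end

section
/- Under Jacod's density hypothesis and the noisy-barrier setup, set F^M_s(l) := p_s(l) 1_{X*_s > l} and N_t(x) := ∫_ℝ F^M_t(l) q_t(x − l) P^L(dl). Let t = t_0 < t_1 < ⋯ < t_{n+1} = T and let Z_0, …, Z_n be bounded random variables with Z_i F_{t_i}-measurable, and let w : Ω × ℝ → ℝ be F_t ⊗ B(ℝ)-measurable such that for P^L-almost every l, w(·,l) is a version of E_P[ Σ_{i=0}^n Z_i (F^M_{t_{i+1}}(l) − F^M_{t_i}(l)) | F_t ]. Then, P-almost surely, E_P[ Σ_{i=0}^n Z_i 1_{t_i < τ ≤ t_{i+1}} | G^I_t ] = − ( 1_{τ > t} / N_t(L_t) ) ∫_ℝ w(·,l) q_t(L_t − l) P^L(dl), where the right-hand side is taken to be 0 on {τ ≤ t}. (The recovery-payment term in the proof of Theorem 5.1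 for stepwise recovery processes.) -/
open MeasureTheory ProbabilityTheory Set
open scoped NNReal Classical

noncomputable section

theorem runInf_meas {Ω : Type*} [m0 : MeasurableSpace Ω] (F : Filtration ℝ≥0 m0)
    (X : ℝ≥0 → Ω → ℝ) (hX_adapted : Adapted F X)
    (hX_cont : ∀ ω, Continuous fun s => X s ω) (s : ℝ≥0) : Measurable[F s] (runInf X s) := by
  have : Nonempty (Set.Icc (0 : ℝ≥0) s) := ⟨⟨0, by simp⟩⟩
  have : CompactSpace (Set.Icc (0 : ℝ≥0) s) := isCompact_iff_compactSpace.mp isCompact_Icc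
  letI : MeasurableSpace Ω := F s
  refine measurable_of_Ici fun a => ?_
  have : runInf X s ⁻¹' Set.Ici a =
      ⋂ k : ℕ, (X (TopologicalSpace.denseSeq (Set.Icc (0 : ℝ≥0) s) k).1) ⁻¹' Set.Ici a := by
    ext ω
    have hc : Continuous fun u : Set.Icc (0 : ℝ≥0) s => X u.1 ω :=
      (hX_cont ω).comp continuous_subtype_val
    have hb : BddBelow (Set.range fun u : Set.Icc (0 : ℝ≥0) s => X u.1 ω) :=
      (isCompact_range hc).bddBelow
    simp only [Set.mem_preimage, Set.mem_Ici, Set.mem_iInter, runInf]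
    rw [le_ciInf_iff hb]
    constructor
    · intro h k
      exact h _
    · intro h u
      have hcl : IsClosed {u : Set.Icc (0 : ℝ≥0) s | a ≤ X u.1 ω} :=
        isClosed_le continuous_const hc
      have := hcl.closure_subset_iff.mpr (show Set.range (TopologicalSpace.denseSeq _) ⊆ _ by
        rintro _ ⟨k, rfl⟩
        exact h k)
      exact this ((TopologicalSpace.denseRange_denseSeq _) u)
  rw [this]
  refine @MeasurableSet.iInter Ω ℕ (F s) _ _ fun k => ?_
  exact ((hX_adapted _).mono (F.mono
    (TopologicalSpace.denseSeq (Set.Icc (0 : ℝ≥0) s) k).2.2) le_rfl) measurableSet_Ici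

theorem sup_eq_gen {Ω : Type*} (m1 m2 : MeasurableSpace Ω) :
    m1 ⊔ m2 = MeasurableSpace.generateFrom
      (Set.image2 (· ∩ ·) {A | MeasurableSet[m1] A} {A | MeasurableSet[m2] A}) := by
  apply le_antisymm
  · refine sup_le ?_ ?_
    · intro A hA
      exact MeasurableSpace.measurableSet_generateFrom
        ⟨A, hA, Set.univ, @MeasurableSet.univ _ m2, by simp⟩
    · intro A hA
      exact MeasurableSpace.measurableSet_generateFrom
        ⟨Set.univ, @MeasurableSet.univ _ m1, A, hA, by simp⟩
  · refine MeasurableSpace.generateFrom_le ?_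
    rintro _ ⟨A, hA, B, hB, rfl⟩
    exact @MeasurableSet.inter _ (m1 ⊔ m2) _ _ ((le_sup_left : m1 ≤ m1 ⊔ m2) _ hA)
      ((le_sup_right : m2 ≤ m1 ⊔ m2) _ hB)

theorem sup_pi {Ω : Type*} (m1 m2 : MeasurableSpace Ω) :
    IsPiSystem 
      (Set.image2 (· ∩ ·) {A | MeasurableSet[m1] A} {A | MeasurableSet[m2] A}) := by
  rintro _ ⟨A, hA, B, hB, rfl⟩ _ ⟨A', hA', B', hB', rfl⟩ _
  exact ⟨A ∩ A', @MeasurableSet.inter _ m1 _ _ hA hA', B ∩ B', @MeasurableSet.inter _ m2 _ _ hB hB',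
    by simp only; rw [Set.inter_inter_inter_comm]⟩

theorem indep_regroup {Ω : Type*} {D E K m0 : MeasurableSpace Ω} {P : Measure Ω}
    [IsProbabilityMeasure P] (hD : D ≤ m0) (hE : E ≤ m0) (hK : K ≤ m0)
    (h1 : Indep D E P) (h2 : Indep (D ⊔ E) K P) : Indep D (E ⊔ K) P := by
  refine IndepSets.indep (p1 := {A | MeasurableSet[D] A}) hD (sup_le hE hK)
    (@MeasurableSpace.isPiSystem_measurableSet _ D) (sup_pi E K)
    (@MeasurableSpace.generateFrom_measurableSet _ D).symm (sup_eq_gen E K) ?_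
  rw [IndepSets_iff]
  rintro A _ hA ⟨B, hB, C, hC, rfl⟩
  have hAB : MeasurableSet[D ⊔ E] (A ∩ B) := @MeasurableSet.inter _ (D ⊔ E) _ _
    ((le_sup_left : D ≤ D ⊔ E) _ hA) ((le_sup_right : E ≤ D ⊔ E) _ hB)
  have hEDE : E ≤ D ⊔ E := le_sup_right
  rw [Indep_iff] at h1 h2
  simp only
  rw [← Set.inter_assoc, h2 _ _ hAB hC, h1 _ _ hA hB, h2 _ _ (hEDE _ hB) hC, mul_assoc]

theorem setInt_sup {Ω : Type*} {m1 m2 m3 m0 : MeasurableSpace Ω} {P : Measure Ω}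
    [IsProbabilityMeasure P] (h13 : m1 ≤ m3) (h3 : m3 ≤ m0) (h2 : m2 ≤ m0)
    (hi : Indep m2 m3 P) (f : Ω → ℝ) (hf : Measurable[m3] f) (hfi : Integrable f P)
    (h : ∀ A, MeasurableSet[m1] A → ∫ ω in A, f ω ∂P = 0) (A : Set Ω)
    (hA : MeasurableSet[m1 ⊔ m2] A) : ∫ ω in A, f ω ∂P = 0 := by
  have hle : m1 ⊔ m2 ≤ m0 := sup_le (h13.trans h3) h2
  have huniv : ∫ ω, f ω ∂P = 0 := by
    simpa using h Set.univ (@MeasurableSet.univ _ m1)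
  induction A, hA using MeasurableSpace.induction_on_inter (sup_eq_gen m1 m2) (sup_pi m1 m2) with
  | empty => simp
  | basic A hA =>
    obtain ⟨A, hA, B, hB, rfl⟩ := hA
    simp only
    have hA0 : MeasurableSet A := h3 _ (h13 _ hA)
    have hB0 : MeasurableSet B := h2 _ hB
    rw [← integral_indicator (hA0.inter hB0)]
    have e1 : (A ∩ B).indicator (fun ω => f ω) = (A.indicator f) * (B.indicator fun _ => (1 : ℝ)) := by
      ext ω
      by_cases h1 : ω ∈ A <;> by_cases h2 : ω ∈ B <;> simp [Set.indicator, h1, h2]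
    have hind : IndepFun (A.indicator f) (B.indicator fun _ => (1 : ℝ)) P := by
      rw [IndepFun_iff_Indep]
      refine indep_of_indep_of_le_left (indep_of_indep_of_le_right hi.symm ?_) ?_
      · exact (Measurable.indicator (@measurable_const _ _ _ m2 _) hB).comap_le
      · exact (Measurable.indicator hf (h13 _ hA)).comap_le
    rw [e1, hind.integral_mul_eq_mul_integral (hfi.indicator hA0).aestronglyMeasurable
      ((measurable_const.indicator hB0).aestronglyMeasurable), integral_indicator hA0, h _ hA, zero_mul]
  | compl A hA ih =>
    have := integral_add_compl (hle _ hA) hfi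
    linarith
  | iUnion g hd hm ih =>
    rw [integral_iUnion (fun i => hle _ (hm i)) hd hfi.integrableOn]
    simp [ih]

theorem meas_int {Ω' : Type*} [MeasurableSpace Ω'] (ν : Measure ℝ) [SFinite ν]
    (f : Ω' × ℝ → ℝ) (hf : Measurable f) (q : ℝ → ℝ) (hq : Measurable q) :
    Measurable (fun z : Ω' × ℝ => ∫ l, f (z.1, l) * q (z.2 - l) ∂ν) := by
  refine StronglyMeasurable.measurable ?_
  refine StronglyMeasurable.integral_prod_right' 
    (f := fun y : (Ω' × ℝ) × ℝ => f (y.1.1, y.2) * q (y.1.2 - y.2)) ?_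
  refine Measurable.stronglyMeasurable ?_
  fun_prop

theorem law_eq {Ω Ω' : Type*} [MeasurableSpace Ω] [MeasurableSpace Ω'] (P : Measure Ω)
    [IsProbabilityMeasure P] (φ : Ω → Ω') (hφ : Measurable φ) (L : Ω → ℝ) (hL : Measurable L)
    (p : Ω' × ℝ → ℝ) (hp : Measurable p) (hp0 : ∀ z, 0 ≤ p z)
    (hd : ∀ A C, MeasurableSet A → MeasurableSet C → P (φ ⁻¹' A ∩ L ⁻¹' C) =
      ∫⁻ ω in φ ⁻¹' A, ∫⁻ l in C, ENNReal.ofReal (p (φ ω, l)) ∂(P.map L) ∂P)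
    (e : Ω → ℝ) (he : Measurable e) (hi : IndepFun (fun ω => (φ ω, L ω)) e P)
    (q : ℝ → ℝ) (hq : Measurable q) (hq0 : ∀ x, 0 ≤ q x)
    (hqd : P.map e = volume.withDensity fun x => ENNReal.ofReal (q x)) :
    P.map (fun ω => (φ ω, (L ω, L ω + e ω))) =
      ((P.map φ).prod ((P.map L).prod volume)).withDensity
        (fun z => ENNReal.ofReal (p (z.1, z.2.1) * q (z.2.2 - z.2.1))) := by
  have : IsProbabilityMeasure (P.map L) := Measure.isProbabilityMeasure_map hL.aemeasurable
  have : IsProbabilityMeasure (P.map φ) := Measure.isProbabilityMeasure_map hφ.aemeasurable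
  have : IsProbabilityMeasure (P.map e) := Measure.isProbabilityMeasure_map he.aemeasurable
  have hJ : P.map (fun ω => (φ ω, L ω)) =
      ((P.map φ).prod (P.map L)).withDensity (fun z => ENNReal.ofReal (p z)) := by
    have : IsProbabilityMeasure (P.map (fun ω => (φ ω, L ω))) :=
      Measure.isProbabilityMeasure_map (by fun_prop)
    refine Measure.ext_prod ?_
    intro A C hA hC
    rw [Measure.map_apply (by fun_prop) (hA.prod hC), withDensity_apply _ (hA.prod hC),
      ← Measure.prod_restrict, lintegral_prod _ (by fun_prop), Measure.restrict_map hφ hA,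
      lintegral_map (f := fun x => ∫⁻ y in C, ENNReal.ofReal (p (x, y)) ∂(P.map L))
        (Measurable.lintegral_prod_right' (f := fun z => ENNReal.ofReal (p z)) (by fun_prop)) hφ, ← hd A C hA hC]
    rfl
  refine Measure.ext_of_lintegral _ fun g hg => ?_
  rw [lintegral_map hg (by fun_prop), lintegral_withDensity_eq_lintegral_mul _ (by fun_prop) hg]
  have hind := (indepFun_iff_map_prod_eq_prod_map_map (by fun_prop) (by fun_prop)).1 hi
  have e1 : ∫⁻ ω, g (φ ω, (L ω, L ω + e ω)) ∂P =
      ∫⁻ z, g (z.1.1, (z.1.2, z.1.2 + z.2)) ∂(P.map (fun ω => ((φ ω, L ω), e ω))) := by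
    rw [lintegral_map (by fun_prop) (by fun_prop)]
  rw [e1, hind, lintegral_prod _ (by fun_prop), hJ,
    lintegral_withDensity_eq_lintegral_mul _ (by fun_prop)
      (Measurable.lintegral_prod_right' (f := fun z : (Ω' × ℝ) × ℝ =>
        g (z.1.1, (z.1.2, z.1.2 + z.2))) (by fun_prop)),
    lintegral_prod _ (by
      refine Measurable.aemeasurable (Measurable.mul (by fun_prop) ?_)
      exact (Measurable.lintegral_prod_right' (f := fun z : (Ω' × ℝ) × ℝ =>
        g (z.1.1, (z.1.2, z.1.2 + z.2))) (by fun_prop))), lintegral_prod _ (by fun_prop)]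
  refine lintegral_congr fun ω => ?_
  rw [lintegral_prod _ (by fun_prop)]
  refine lintegral_congr fun l => ?_
  simp only [Pi.mul_apply]
  rw [hqd, lintegral_withDensity_eq_lintegral_mul _ (by fun_prop) (by fun_prop),
    ← lintegral_const_mul _ (by fun_prop), ← lintegral_sub_right_eq_self _ l]
  refine lintegral_congr fun x => ?_
  simp only [Pi.mul_apply]
  rw [ENNReal.ofReal_mul (hp0 _), mul_assoc]
  simp

theorem law_int {Ω Ω' : Type*} [MeasurableSpace Ω] [MeasurableSpace Ω'] (P : Measure Ω)
    [IsProbabilityMeasure P] (φ : Ω → Ω') (hφ : Measurable φ) (L : Ω → ℝ) (hL : Measurable L)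
    (p : Ω' × ℝ → ℝ) (hp : Measurable p) (hp0 : ∀ z, 0 ≤ p z)
    (hd : ∀ A C, MeasurableSet A → MeasurableSet C → P (φ ⁻¹' A ∩ L ⁻¹' C) =
      ∫⁻ ω in φ ⁻¹' A, ∫⁻ l in C, ENNReal.ofReal (p (φ ω, l)) ∂(P.map L) ∂P)
    (e : Ω → ℝ) (he : Measurable e) (hi : IndepFun (fun ω => (φ ω, L ω)) e P)
    (q : ℝ → ℝ) (hq : Measurable q) (hq0 : ∀ x, 0 ≤ q x)
    (hqd : P.map e = volume.withDensity fun x => ENNReal.ofReal (q x))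
    (g : Ω' × (ℝ × ℝ) → ℝ) (hg : Measurable g) :
    (Integrable (fun ω => g (φ ω, (L ω, L ω + e ω))) P ↔
      Integrable (fun z : Ω × (ℝ × ℝ) => p (φ z.1, z.2.1) * q (z.2.2 - z.2.1) * g (φ z.1, z.2))
        (P.prod ((P.map L).prod volume))) ∧
    ∫ ω, g (φ ω, (L ω, L ω + e ω)) ∂P =
      ∫ z : Ω × (ℝ × ℝ), p (φ z.1, z.2.1) * q (z.2.2 - z.2.1) * g (φ z.1, z.2)
        ∂(P.prod ((P.map L).prod volume)) := by
  have h := law_eq P φ hφ L hL p hp hp0 hd e he hi q hq hq0 hqd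
  have : IsProbabilityMeasure (P.map L) := Measure.isProbabilityMeasure_map hL.aemeasurable
  have h2 : (P.map φ).prod ((P.map L).prod (volume : Measure ℝ)) =
      (P.prod ((P.map L).prod (volume : Measure ℝ))).map (Prod.map φ id) := by
    rw [← Measure.map_prod_map _ _ hφ measurable_id, Measure.map_id]
  have hm : Measurable fun ω => (φ ω, (L ω, L ω + e ω)) := by fun_prop
  have hm2 : Measurable (Prod.map φ (id : ℝ × ℝ → ℝ × ℝ)) := by fun_prop
  have hdm : Measurable (fun z : Ω' × (ℝ × ℝ) => (p (z.1, z.2.1) * q (z.2.2 - z.2.1)).toNNReal) := by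
    fun_prop
  have hpq : ∀ z : Ω' × (ℝ × ℝ), 0 ≤ p (z.1, z.2.1) * q (z.2.2 - z.2.1) :=
    fun z => mul_nonneg (hp0 _) (hq0 _)
  have h3 : (fun z : Ω × (ℝ × ℝ) => p (φ z.1, z.2.1) * q (z.2.2 - z.2.1) * g (φ z.1, z.2)) =
    (fun z : Ω' × (ℝ × ℝ) => (p (z.1, z.2.1) * q (z.2.2 - z.2.1)).toNNReal • g z) ∘ (Prod.map φ id) := by
    ext z
    simp only [Function.comp, Prod.map, id, NNReal.smul_def, smul_eq_mul]
    rw [Real.coe_toNNReal _ (hpq (φ z.1, z.2))]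
  have hm3 : Measurable (fun z : Ω' × (ℝ × ℝ) => (p (z.1, z.2.1) * q (z.2.2 - z.2.1)).toNNReal • g z) := by
    fun_prop
  constructor
  · have := integrable_map_measure (μ := P) (f := fun ω => (φ ω, (L ω, L ω + e ω))) (g := g) hg.aestronglyMeasurable hm.aemeasurable
    rw [show (fun ω => g (φ ω, (L ω, L ω + e ω))) = g ∘ fun ω => (φ ω, (L ω, L ω + e ω)) from rfl,
      ← this, h, h3, ← integrable_map_measure hm3.aestronglyMeasurable hm2.aemeasurable, ← h2]
    exact integrable_withDensity_iff_integrable_smul hdm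
  · rw [← integral_map (f := g) hm.aemeasurable hg.aestronglyMeasurable, h]
    refine (integral_withDensity_eq_integral_smul hdm g).trans ?_
    rw [h2, integral_map hm2.aemeasurable hm3.aestronglyMeasurable, h3]
    rfl

theorem jacod_hd {Ω : Type*} {m m0 : MeasurableSpace Ω} {P : Measure Ω} [IsProbabilityMeasure P]
    (hm : m ≤ m0) (L : Ω → ℝ) (hL : Measurable L) (p : ℝ → Ω → ℝ)
    (hp_nonneg : ∀ x ω, 0 ≤ p x ω)
    (hp_density : ∀ (f : ℝ → ℝ), Measurable f → (∃ C, ∀ x, |f x| ≤ C) →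
      (P[fun ω => f (L ω)|m]) =ᵐ[P] fun ω => ∫ x, f x * p x ω ∂(P.map L))
    (A : Set Ω) (C : Set ℝ) (hA : MeasurableSet[m] A) (hC : MeasurableSet C) :
    P (A ∩ L ⁻¹' C) = ∫⁻ ω in A, ∫⁻ l in C, ENNReal.ofReal (p l ω) ∂(P.map L) ∂P := by
  have h1 := hp_density (fun _ => 1) measurable_const ⟨1, by simp⟩
  rw [condExp_const hm] at h1
  have h2 := hp_density (C.indicator fun _ => 1) (measurable_const.indicator hC)
    ⟨1, fun x => by by_cases h : x ∈ C <;> simp [h]⟩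
  have hint : Integrable (fun ω => C.indicator (fun _ => (1 : ℝ)) (L ω)) P :=
    (integrable_const (1 : ℝ)).indicator (hL hC)
  have h3 : ∀ᵐ ω ∂P, ∫⁻ l in C, ENNReal.ofReal (p l ω) ∂(P.map L) =
      ENNReal.ofReal ((P[fun ω => C.indicator (fun _ => (1 : ℝ)) (L ω)|m]) ω) := by
    filter_upwards [h1, h2] with ω e1 e2
    rw [e2]
    have hi : Integrable (fun l => p l ω) (P.map L) := by
      by_contra hn
      simp only [one_mul] at e1
      rw [integral_undef hn] at e1
      exact one_ne_zero e1
    have : (fun x => C.indicator (fun _ => (1 : ℝ)) x * p x ω) = C.indicator fun x => p x ω := by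
      ext x
      by_cases h : x ∈ C <;> simp [h]
    rw [this, integral_indicator hC, ofReal_integral_eq_lintegral_ofReal hi.integrableOn]
    exact Filter.Eventually.of_forall fun x => hp_nonneg x ω
  rw [lintegral_congr_ae (ae_restrict_of_ae h3), ← ofReal_integral_eq_lintegral_ofReal
    integrable_condExp.integrableOn, setIntegral_condExp hm hint hA]
  · rw [show (fun ω => C.indicator (fun _ => (1 : ℝ)) (L ω)) = (L ⁻¹' C).indicator fun _ => 1 from rfl,
      setIntegral_indicator (hL hC)]
    simp
  · refine ae_restrict_of_ae ?_
    refine condExp_nonneg (Filter.Eventually.of_forall fun ω => ?_)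
    by_cases h : L ω ∈ C <;> simp [h]

theorem law_m {Ω : Type*} {m m0 : MeasurableSpace Ω} {P : Measure Ω} [IsProbabilityMeasure P]
    (hm : m ≤ m0) (L : Ω → ℝ) (hL : Measurable L) (p : ℝ → Ω → ℝ)
    (hp_nonneg : ∀ x ω, 0 ≤ p x ω)
    (hp_meas : Measurable[m.prod inferInstance] fun q : Ω × ℝ => p q.2 q.1)
    (hp_density : ∀ (f : ℝ → ℝ), Measurable f → (∃ C, ∀ x, |f x| ≤ C) →
      (P[fun ω => f (L ω)|m]) =ᵐ[P] fun ω => ∫ x, f x * p x ω ∂(P.map L))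
    (e : Ω → ℝ) (he : Measurable e)
    (hi : Indep (MeasurableSpace.comap e inferInstance)
      (m ⊔ MeasurableSpace.comap L inferInstance) P)
    (q : ℝ → ℝ) (hq : Measurable q) (hq0 : ∀ x, 0 ≤ q x)
    (hqd : P.map e = volume.withDensity fun x => ENNReal.ofReal (q x))
    (g : Ω × (ℝ × ℝ) → ℝ) (hg : Measurable[m.prod inferInstance] g) :
    (Integrable (fun ω => g (ω, (L ω, L ω + e ω))) P ↔
      Integrable (fun z : Ω × (ℝ × ℝ) => p z.2.1 z.1 * q (z.2.2 - z.2.1) * g z)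
        (P.prod ((P.map L).prod volume))) ∧
    ∫ ω, g (ω, (L ω, L ω + e ω)) ∂P =
      ∫ z : Ω × (ℝ × ℝ), p z.2.1 z.1 * q (z.2.2 - z.2.1) * g z
        ∂(P.prod ((P.map L).prod volume)) := by
  have hd := jacod_hd hm L hL p hp_nonneg hp_density
  have hi' : @IndepFun Ω (Ω × ℝ) ℝ m0 (m.prod inferInstance) inferInstance
      (fun ω => (ω, L ω)) e P := by
    refine (@IndepFun_iff_Indep Ω (Ω × ℝ) ℝ m0 (m.prod inferInstance) inferInstance
      (fun ω => (ω, L ω)) e P).2 ?_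
    refine (indep_of_indep_of_le_right hi ?_).symm
    refine le_of_eq ?_
    rw [MeasurableSpace.prod, MeasurableSpace.comap_sup, MeasurableSpace.comap_comp,
      MeasurableSpace.comap_comp]
    congr 1
    exact MeasurableSpace.comap_id
  exact @law_int Ω Ω m0 m P _ (fun ω => ω) (measurable_id'' hm) L hL (fun z => p z.2 z.1) hp_meas
    (fun z => hp_nonneg _ _) hd e he hi' q hq hq0 hqd g hg

theorem fubini_x {Ω : Type*} [MeasurableSpace Ω] {P : Measure Ω} [IsProbabilityMeasure P]
    (ν : Measure ℝ) [IsProbabilityMeasure ν] (k h : Ω × ℝ → ℝ) (q : ℝ → ℝ)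
    (hint : Integrable (fun z : Ω × (ℝ × ℝ) => h (z.1, z.2.2) * (k (z.1, z.2.1) * q (z.2.2 - z.2.1)))
      (P.prod (ν.prod volume))) :
    ∫ z : Ω × (ℝ × ℝ), h (z.1, z.2.2) * (k (z.1, z.2.1) * q (z.2.2 - z.2.1))
      ∂(P.prod (ν.prod volume)) =
    ∫ ω, ∫ x, h (ω, x) * ∫ l, k (ω, l) * q (x - l) ∂ν ∂volume ∂P := by
  rw [integral_prod _ hint]
  refine integral_congr_ae ?_
  filter_upwards [hint.prod_right_ae] with ω hω
  rw [integral_prod_symm _ hω]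
  refine integral_congr_ae (Filter.Eventually.of_forall fun x => ?_)
  simp only
  rw [integral_const_mul]

theorem swap_w {Ω : Type*} {m m0 : MeasurableSpace Ω} {P : Measure Ω} [IsProbabilityMeasure P]
    (hm : m ≤ m0) 
    (ν : Measure ℝ) [IsProbabilityMeasure ν] (S w : Ω × ℝ → ℝ) (hS : Measurable S)
    (hw_meas : Measurable w)
    (hw : ∀ᵐ l ∂ν, (fun ω => w (ω, l)) =ᵐ[P] P[fun ω => S (ω, l)|m])
    (q : ℝ → ℝ) (hq : Measurable q)
    (hint : Integrable (fun z : Ω × (ℝ × ℝ) => S (z.1, z.2.1) * q (z.2.2 - z.2.1))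
      (P.prod (ν.prod volume))) :
    Integrable (fun z : Ω × (ℝ × ℝ) => w (z.1, z.2.1) * q (z.2.2 - z.2.1))
      (P.prod (ν.prod volume)) ∧
    ∀ A : Set (Ω × ℝ), MeasurableSet[m.prod inferInstance] A →
    ∫ z : Ω × (ℝ × ℝ), A.indicator (fun _ => 1) (z.1, z.2.2) * (w (z.1, z.2.1) * q (z.2.2 - z.2.1))
      ∂(P.prod (ν.prod volume)) =
    ∫ z : Ω × (ℝ × ℝ), A.indicator (fun _ => 1) (z.1, z.2.2) * (S (z.1, z.2.1) * q (z.2.2 - z.2.1))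
      ∂(P.prod (ν.prod volume)) := by
  have hw2 : ∀ᵐ y ∂(ν.prod (volume : Measure ℝ)),
      (fun ω => w (ω, y.1)) =ᵐ[P] P[fun ω => S (ω, y.1)|m] :=
    Measure.quasiMeasurePreserving_fst.ae hw
  have hwi : Integrable (fun z : Ω × (ℝ × ℝ) => w (z.1, z.2.1) * q (z.2.2 - z.2.1))
      (P.prod (ν.prod volume)) := by
    refine ⟨Measurable.aestronglyMeasurable (by fun_prop), ?_⟩
    refine lt_of_le_of_lt ?_ hint.2
    have e1 : ∀ f : Ω × (ℝ × ℝ) → ℝ, Measurable f →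
        ∫⁻ z, ‖f z‖ₑ ∂(P.prod (ν.prod volume)) =
          ∫⁻ y, ∫⁻ ω, ‖f (ω, y)‖ₑ ∂P ∂(ν.prod volume) := fun f hf =>
      lintegral_prod_symm _ (by fun_prop)
    rw [e1 _ (by fun_prop), e1 _ (by fun_prop)]
    refine lintegral_mono_ae ?_
    filter_upwards [hw2] with y hy
    simp only [enorm_mul]
    rw [lintegral_mul_const _ (by fun_prop), lintegral_mul_const _ (by fun_prop)]
    refine mul_le_mul' ?_ le_rfl
    have h1 := eLpNorm_one_condExp_le_eLpNorm (m := m) (μ := P) (fun ω => S (ω, y.1))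
    rw [← eLpNorm_congr_ae hy, eLpNorm_one_eq_lintegral_enorm, eLpNorm_one_eq_lintegral_enorm] at h1
    exact h1
  refine ⟨hwi, fun A hA => ?_⟩
  have hA0 : MeasurableSet A := by
    have : (m.prod inferInstance : MeasurableSpace (Ω × ℝ)) ≤ Prod.instMeasurableSpace := by
      refine sup_le_sup ?_ le_rfl
      exact MeasurableSpace.comap_mono hm
    exact this _ hA
  have hb : ∀ f : Ω × (ℝ × ℝ) → ℝ, Integrable f (P.prod (ν.prod volume)) →
      Integrable (fun z => A.indicator (fun _ => (1 : ℝ)) (z.1, z.2.2) * f z)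
        (P.prod (ν.prod volume)) := by
    intro f hf
    refine hf.bdd_mul (c := 1) ?_ ?_
    · exact ((measurable_const.indicator hA0).comp
        (by fun_prop : Measurable fun z : Ω × (ℝ × ℝ) => (z.1, z.2.2))).aestronglyMeasurable
    · refine Filter.Eventually.of_forall fun z => ?_
      by_cases h : (z.1, z.2.2) ∈ A <;> simp [h]
  rw [integral_prod_symm _ (hb _ hwi), integral_prod_symm _ (hb _ hint)]
  refine integral_congr_ae ?_
  filter_upwards [hw2, hint.prod_left_ae] with y hy hyi
  by_cases hq0 : q (y.2 - y.1) = 0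
  · simp [hq0]
  have hSi : Integrable (fun ω => S (ω, y.1)) P := by
    have := hyi.mul_const (q (y.2 - y.1))⁻¹
    simpa [mul_assoc, hq0] using this
  have hsec : MeasurableSet[m] ((fun ω => (ω, y.2)) ⁻¹' A) := by
    letI : MeasurableSpace Ω := m
    exact (measurable_prodMk_right : Measurable fun ω : Ω => (ω, y.2)) hA
  have key : ∀ f : Ω → ℝ, ∫ ω, A.indicator (fun _ => (1 : ℝ)) (ω, y.2) * (f ω * q (y.2 - y.1)) ∂P =
      (∫ ω in (fun ω => (ω, y.2)) ⁻¹' A, f ω ∂P) * q (y.2 - y.1) := by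
    intro f
    rw [← integral_indicator (hm _ hsec), ← integral_mul_const]
    congr 1
    ext ω
    by_cases h : (ω, y.2) ∈ A
    · rw [Set.indicator_of_mem h, Set.indicator_of_mem (show ω ∈ (fun ω => (ω, y.2)) ⁻¹' A from h)]
      ring
    · rw [Set.indicator_of_notMem h,
        Set.indicator_of_notMem (show ω ∉ (fun ω => (ω, y.2)) ⁻¹' A from h)]
      ring
  rw [key (fun ω => w (ω, y.1)), key (fun ω => S (ω, y.1)),
    integral_congr_ae (ae_restrict_of_ae hy), setIntegral_condExp hm hSi hsec]

theorem sub_G {Ω : Type*} {H : MeasurableSpace Ω} (τ : Ω → ℝ≥0) (t : ℝ≥0) (A : Set Ω)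
    (hA : MeasurableSet[H ⊔ defaultSigma τ t] A) :
    ∃ A', MeasurableSet[H] A' ∧ A ∩ {ω | t < τ ω} = A' ∩ {ω | t < τ ω} := by
  have hgen : H ⊔ defaultSigma τ t = MeasurableSpace.generateFrom
      ({A | MeasurableSet[H] A} ∪ {A | ∃ s ≤ t, A = {ω | τ ω ≤ s}}) := by
    rw [← MeasurableSpace.generateFrom_sup_generateFrom, MeasurableSpace.generateFrom_measurableSet]
    rfl
  rw [hgen] at hA
  induction A, hA using MeasurableSpace.generateFrom_induction with
  | hC A hA _ =>
    rcases hA with hA | ⟨s, hs, rfl⟩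
    · exact ⟨A, hA, rfl⟩
    · refine ⟨∅, MeasurableSet.empty, ?_⟩
      ext ω
      simp only [Set.mem_inter_iff, Set.mem_ofPred_eq, Set.mem_empty_iff_false, false_and, iff_false]
      rintro ⟨h1, h2⟩
      exact absurd (h1.trans hs) (not_le.mpr h2)
  | empty => exact ⟨∅, MeasurableSet.empty, rfl⟩
  | compl A _ ih =>
    obtain ⟨A', h1, h2⟩ := ih
    refine ⟨A'ᶜ, h1.compl, ?_⟩
    ext ω
    have := Set.ext_iff.1 h2 ω
    simp only [Set.mem_inter_iff, Set.mem_compl_iff] at this ⊢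
    tauto
  | iUnion f _ ih =>
    choose g hg1 hg2 using ih
    refine ⟨⋃ i, g i, MeasurableSet.iUnion hg1, ?_⟩
    rw [Set.iUnion_inter, Set.iUnion_inter]
    exact Set.iUnion_congr hg2

theorem prod_mono {Ω : Type*} {m m0 : MeasurableSpace Ω} (β : Type*) [mb : MeasurableSpace β]
    (hm : m ≤ m0) : m.prod mb ≤ m0.prod mb :=
  sup_le_sup (MeasurableSpace.comap_mono hm) le_rfl

theorem key_meas {Ω' : Type*} [MeasurableSpace Ω'] (Z R : Ω' → ℝ) (hZ : Measurable Z)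
    (hR : Measurable R) (h : Ω' × ℝ → ℝ) (hh : Measurable h) :
    Measurable (fun z : Ω' × (ℝ × ℝ) =>
      h (z.1, z.2.2) * (Z z.1 * if z.2.1 < R z.1 then 1 else 0)) := by
  refine Measurable.mul (by fun_prop) (Measurable.mul (by fun_prop) ?_)
  refine Measurable.ite (measurableSet_lt (by fun_prop) (by fun_prop)) measurable_const
    measurable_const

theorem FM_meas {Ω' : Type*} [MeasurableSpace Ω'] (p : Ω' × ℝ → ℝ) (R : Ω' → ℝ) (hp : Measurable p)
    (hR : Measurable R) :
    Measurable (fun z : Ω' × ℝ => p z * if z.2 < R z.1 then (1 : ℝ) else 0) := by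
  refine Measurable.mul hp ?_
  refine Measurable.ite (measurableSet_lt (by fun_prop) (by fun_prop)) measurable_const
    measurable_const

theorem quot_meas {Ω' : Type*} [MeasurableSpace Ω'] (W N : Ω' × ℝ → ℝ) (hW : Measurable W)
    (hN : Measurable N) : Measurable (fun z => -(W z / N z)) := (hW.div hN).neg

theorem ind_int {Ω : Type*} [MeasurableSpace Ω] {P : Measure Ω} [IsProbabilityMeasure P]
    (ν : Measure ℝ) [IsProbabilityMeasure ν] (A : Set (Ω × ℝ)) (hA0 : MeasurableSet A)
    (f : Ω × (ℝ × ℝ) → ℝ) (hf : Integrable f (P.prod (ν.prod volume))) :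
      Integrable (fun z => A.indicator (fun _ => (1 : ℝ)) (z.1, z.2.2) * f z)
        (P.prod (ν.prod volume)) := by
  refine hf.bdd_mul (c := 1) ?_ ?_
  · exact ((measurable_const.indicator hA0).comp
      (by fun_prop : Measurable fun z : Ω × (ℝ × ℝ) => (z.1, z.2.2))).aestronglyMeasurable
  · refine Filter.Eventually.of_forall fun z => ?_
    by_cases h : (z.1, z.2.2) ∈ A <;> simp [h]

theorem int_quot {Ω : Type*} [MeasurableSpace Ω] {P : Measure Ω} [IsProbabilityMeasure P]
    (ν : Measure ℝ) [IsProbabilityMeasure ν] (k w : Ω × ℝ → ℝ) (q : ℝ → ℝ)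
    (hk : Measurable k) (hw : Measurable w) (hq : Measurable q)
    (hk0 : ∀ z, 0 ≤ k z) (hq0 : ∀ x, 0 ≤ q x) (h : Ω × ℝ → ℝ) (hh : Measurable h)
    (hdef : ∀ ω x, h (ω, x) = -((∫ l, w (ω, l) * q (x - l) ∂ν) / ∫ l, k (ω, l) * q (x - l) ∂ν))
    (hint : Integrable (fun z : Ω × (ℝ × ℝ) => w (z.1, z.2.1) * q (z.2.2 - z.2.1))
      (P.prod (ν.prod volume))) :
    Integrable (fun z : Ω × (ℝ × ℝ) => h (z.1, z.2.2) * (k (z.1, z.2.1) * q (z.2.2 - z.2.1)))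
      (P.prod (ν.prod volume)) := by
  refine ⟨Measurable.aestronglyMeasurable (by fun_prop), ?_⟩
  refine lt_of_le_of_lt ?_ hint.2
  have e1 : ∀ f : Ω × (ℝ × ℝ) → ℝ, Measurable f →
      ∫⁻ z, ‖f z‖ₑ ∂(P.prod (ν.prod volume)) =
        ∫⁻ ω, ∫⁻ x, ∫⁻ l, ‖f (ω, (l, x))‖ₑ ∂ν ∂volume ∂P := by
    intro f hf
    rw [lintegral_prod _ (by fun_prop)]
    refine lintegral_congr fun ω => ?_
    rw [lintegral_prod_symm _ (by fun_prop)]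
  rw [e1 _ (by fun_prop), e1 _ (by fun_prop)]
  refine lintegral_mono fun ω => lintegral_mono fun x => ?_
  simp only
  by_cases hN : ∫ l, k (ω, l) * q (x - l) ∂ν = 0
  · simp [hdef, hN]
  have hi : Integrable (fun l => k (ω, l) * q (x - l)) ν := by
    by_contra hn
    exact hN (integral_undef hn)
  have hnn : ∀ l, 0 ≤ k (ω, l) * q (x - l) := fun l => mul_nonneg (hk0 _) (hq0 _)
  have e2 : ∫⁻ l, ‖k (ω, l) * q (x - l)‖ₑ ∂ν = ‖∫ l, k (ω, l) * q (x - l) ∂ν‖ₑ := by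
    rw [Real.enorm_eq_ofReal (integral_nonneg hnn), ofReal_integral_eq_lintegral_ofReal hi
      (Filter.Eventually.of_forall hnn)]
    exact lintegral_congr fun l => Real.enorm_eq_ofReal (hnn l)
  calc ∫⁻ l, ‖h (ω, x) * (k (ω, l) * q (x - l))‖ₑ ∂ν
      = ‖h (ω, x)‖ₑ * ∫⁻ l, ‖k (ω, l) * q (x - l)‖ₑ ∂ν := by
        rw [← lintegral_const_mul _ (by fun_prop)]
        exact lintegral_congr fun l => enorm_mul _ _
    _ = ‖∫ l, w (ω, l) * q (x - l) ∂ν‖ₑ := by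
        rw [e2, ← enorm_mul, hdef, neg_mul, div_mul_cancel₀ _ hN, enorm_neg]
    _ ≤ _ := enorm_integral_le_lintegral_enorm _

/-- **Recovery-payment term in the proof of Theorem 5.1.** Under Jacod's density hypothesis
and the noisy-barrier setup, for a partition `t = t_0 < ⋯ < t_{n+1} = T`, bounded
`F_{t_i}`-measurable `Z_i`, and `w(·,l)` a version (for `P^L`-a.e. `l`) of
`E_P[Σ_i Z_i (F^M_{t_{i+1}}(l) − F^M_{t_i}(l)) | F_t]`, one has, `P`-a.s.,
`E_P[Σ_i Z_i 1_{t_i < τ ≤ t_{i+1}} | G^I_t] = −(1_{τ > t}/N_t(L_t)) ∫ w(·,l) q_t(L_t − l)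
P^L(dl)` (the right-hand side being `0` on `{τ ≤ t}`). -/
theorem insider_recovery_term
    {Ω : Type*} [m0 : MeasurableSpace Ω] {P : Measure Ω} [IsProbabilityMeasure P]
    (F : Filtration ℝ≥0 m0)
    (X : ℝ≥0 → Ω → ℝ) (hX_adapted : Adapted F X)
    (hX_cont : ∀ ω, Continuous fun s => X s ω)
    (L : Ω → ℝ) (hL : Measurable L)
    (hX0 : ∀ᵐ ω ∂P, L ω < X 0 ω)
    (τ : Ω → ℝ≥0)
    (hτ : ∀ (θ : ℝ≥0) (ω : Ω), θ < τ ω ↔ L ω < runInf X θ ω)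
    -- Jacod's density hypothesis
    (p : ℝ≥0 → ℝ → Ω → ℝ)
    (hp_nonneg : ∀ t x ω, 0 ≤ p t x ω)
    (hp_meas : ∀ t, Measurable[(F t).prod inferInstance] fun q : Ω × ℝ => p t q.2 q.1)
    (hp_pos : ∀ t, ∀ᵐ ω ∂P, 0 < p t (L ω) ω)
    (hp_density : ∀ (t : ℝ≥0) (f : ℝ → ℝ), Measurable f → (∃ C, ∀ x, |f x| ≤ C) →
      (P[fun ω => f (L ω)|F t]) =ᵐ[P] fun ω => ∫ x, f x * p t x ω ∂(P.map L))
    -- the noise process: continuous, independent of `F_∞ ∨ σ(L)`, with backwardly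
    -- independent increments, whose marginal laws admit Lebesgue densities `q_t`
    (ε : ℝ≥0 → Ω → ℝ) (hε_meas : ∀ s, Measurable (ε s))
    (hε_cont : ∀ ω, Continuous fun s => ε s ω)
    (hε_indep : Indep (⨆ s, MeasurableSpace.comap (ε s) inferInstance)
      ((⨆ s, F s) ⊔ MeasurableSpace.comap L inferInstance) P)
    (hε_back : ∀ t θ : ℝ≥0, t ≤ θ →
      Indep (⨆ s ∈ Set.Iic t, MeasurableSpace.comap (fun ω => ε s ω - ε t ω) inferInstance)
        (MeasurableSpace.comap (ε θ) inferInstance) P)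
    (q : ℝ≥0 → ℝ → ℝ) (hq_meas : ∀ s, Measurable (q s)) (hq_nonneg : ∀ s x, 0 ≤ q s x)
    (hq_density : ∀ s, P.map (ε s) = volume.withDensity fun x => ENNReal.ofReal (q s x))
    -- the partition `t = t_0 < t_1 < ⋯ < t_{n+1} = T` and the stepwise recovery payments
    (n : ℕ) (ts : Fin (n + 2) → ℝ≥0) (hts : StrictMono ts)
    (t T : ℝ≥0) (hts0 : ts 0 = t) (htsT : ts (Fin.last (n + 1)) = T)
    (Z : Fin (n + 1) → Ω → ℝ)
    (hZ_meas : ∀ i, Measurable[F (ts i.castSucc)] (Z i))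
    (hZ_bdd : ∀ i, ∃ C, ∀ ω, |Z i ω| ≤ C)
    -- the kernel `w`
    (w : Ω × ℝ → ℝ)
    (hw_meas : Measurable[(F t).prod inferInstance] w)
    (hw : ∀ᵐ l ∂(P.map L), (fun ω => w (ω, l)) =ᵐ[P]
      P[fun ω => ∑ i : Fin (n + 1),
        Z i ω * (FM p X (ts i.succ) l ω - FM p X (ts i.castSucc) l ω)|F t]) :
    P {ω | t < τ ω ∧ NI P p X L q t (L ω + ε t ω) ω = 0} = 0 ∧
    (P[fun ω => ∑ i : Fin (n + 1),
        Z i ω * (if ts i.castSucc < τ ω ∧ τ ω ≤ ts i.succ then 1 else 0)|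
          insiderFullSigma F L ε τ t]) =ᵐ[P]
      fun ω => if t < τ ω then
        -((∫ l, w (ω, l) * q t (L ω + ε t ω - l) ∂(P.map L))
          / NI P p X L q t (L ω + ε t ω) ω)
      else 0 := by
  have hR := runInf_meas F X hX_adapted hX_cont
  have hR0 : ∀ s, Measurable (runInf X s) := fun s => (hR s).mono (F.le s) le_rfl
  have hν : IsProbabilityMeasure (P.map L) := Measure.isProbabilityMeasure_map hL.aemeasurable
  set ν := P.map L with hνdef
  set ρ := P.prod (ν.prod (volume : Measure ℝ)) with hρ
  have hεσ : ∀ s, MeasurableSpace.comap (ε s) inferInstance ≤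
      ⨆ s, MeasurableSpace.comap (ε s) (inferInstance : MeasurableSpace ℝ) := fun s =>
    le_iSup (fun s => MeasurableSpace.comap (ε s) (inferInstance : MeasurableSpace ℝ)) s
  -- basic change of measure
  have key : ∀ (s : ℝ≥0) (Zf : Ω → ℝ) (h : Ω × ℝ → ℝ), Measurable[F s] Zf →
      Measurable[(F s).prod inferInstance] h →
      (Integrable (fun ω => h (ω, L ω + ε t ω) *
          (Zf ω * if L ω < runInf X s ω then 1 else 0)) P ↔
        Integrable (fun z : Ω × (ℝ × ℝ) => h (z.1, z.2.2) *
          ((Zf z.1 * FM p X s z.2.1 z.1) * q t (z.2.2 - z.2.1))) ρ) ∧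
      ∫ ω, h (ω, L ω + ε t ω) * (Zf ω * if L ω < runInf X s ω then 1 else 0) ∂P =
        ∫ z : Ω × (ℝ × ℝ), h (z.1, z.2.2) *
          ((Zf z.1 * FM p X s z.2.1 z.1) * q t (z.2.2 - z.2.1)) ∂ρ := by
    intro s Zf h hZf hh
    have hi : Indep (MeasurableSpace.comap (ε t) inferInstance)
        (F s ⊔ MeasurableSpace.comap L inferInstance) P := by
      refine indep_of_indep_of_le_left (indep_of_indep_of_le_right hε_indep ?_) (hεσ t)
      exact sup_le_sup (le_iSup (fun s => (F s : MeasurableSpace Ω)) s) le_rfl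
    have := law_m (F.le s) L hL (p s) (hp_nonneg s) (hp_meas s) (hp_density s) (ε t) (hε_meas t)
      hi (q t) (hq_meas t) (hq_nonneg t) (hq_density t) _
      (@key_meas Ω (F s) Zf (runInf X s) hZf (hR s) h hh)
    have e : (fun z : Ω × (ℝ × ℝ) => h (z.1, z.2.2) *
          ((Zf z.1 * FM p X s z.2.1 z.1) * q t (z.2.2 - z.2.1))) =
        fun z : Ω × (ℝ × ℝ) => p s z.2.1 z.1 * q t (z.2.2 - z.2.1) *
          (h (z.1, z.2.2) * (Zf z.1 * if z.2.1 < runInf X s z.1 then 1 else 0)) := by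
      ext z
      simp only [FM]
      ring
    rw [e]
    exact this
  have hFM : ∀ s, Measurable[(F s).prod inferInstance] (fun z : Ω × ℝ => FM p X s z.2 z.1) :=
    fun s => @FM_meas Ω (F s) (fun z => p s z.2 z.1) (runInf X s) (hp_meas s) (hR s)
  have hFM0 : ∀ s, Measurable (fun z : Ω × ℝ => FM p X s z.2 z.1) := fun s =>
    (hFM s).mono (prod_mono ℝ (F.le s)) le_rfl
  have hFMnn : ∀ s l ω, 0 ≤ FM p X s l ω := by
    intro s l ω
    simp only [FM]
    exact mul_nonneg (hp_nonneg _ _ _) (by split_ifs <;> norm_num)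
  have hw0 : Measurable w := hw_meas.mono (prod_mono ℝ (F.le t)) le_rfl
  have hLt : Measurable fun ω => L ω + ε t ω := hL.add (hε_meas t)
  have hLtp : Measurable fun ω => (ω, L ω + ε t ω) := measurable_id.prodMk hLt
  set Nf : Ω × ℝ → ℝ := fun z => ∫ l, FM p X t l z.1 * q t (z.2 - l) ∂ν with hNf
  set Wf : Ω × ℝ → ℝ := fun z => ∫ l, w (z.1, l) * q t (z.2 - l) ∂ν with hWf
  have hNm : Measurable[(F t).prod inferInstance] Nf :=
    @meas_int Ω (F t) ν _ (fun z => FM p X t z.2 z.1) (hFM t) (q t) (hq_meas t)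
  have hWm : Measurable[(F t).prod inferInstance] Wf :=
    @meas_int Ω (F t) ν _ w hw_meas (q t) (hq_meas t)
  have hNI : ∀ x ω, NI P p X L q t x ω = Nf (ω, x) := fun x ω => rfl
  have hle : ∀ s, t ≤ s → (F t).prod (inferInstance : MeasurableSpace ℝ) ≤
      (F s).prod (inferInstance : MeasurableSpace ℝ) := fun s hs => prod_mono ℝ (F.mono hs)
  have hle0 : (F t).prod (inferInstance : MeasurableSpace ℝ) ≤
      m0.prod (inferInstance : MeasurableSpace ℝ) := prod_mono ℝ (F.le t)
  have hindm : ∀ A : Set (Ω × ℝ), MeasurableSet[(F t).prod inferInstance] A →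
      Measurable[(F t).prod inferInstance] (A.indicator fun _ => (1 : ℝ)) := fun A hA =>
    Measurable.indicator (@measurable_const _ _ _ ((F t).prod inferInstance) _) hA
  have habs : ∀ (A : Set (Ω × ℝ)) z, |A.indicator (fun _ => (1 : ℝ)) z| ≤ 1 := by
    intro A z
    by_cases h : z ∈ A <;> simp [h]
  -- bounded functions are integrable
  have hbint : ∀ (s u : ℝ≥0) (Zf : Ω → ℝ) (A : Set (Ω × ℝ)), Measurable[F u] Zf →
      (∃ C, ∀ ω, |Zf ω| ≤ C) → MeasurableSet[(F t).prod inferInstance] A →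
      Integrable (fun ω => A.indicator (fun _ => (1 : ℝ)) (ω, L ω + ε t ω) *
          (Zf ω * if L ω < runInf X s ω then 1 else 0)) P := by
    intro s u Zf A hZf ⟨C, hC⟩ hA
    refine Integrable.of_bound (C := C) ?_ ?_
    · refine Measurable.aestronglyMeasurable ?_
      refine Measurable.mul ?_ (Measurable.mul (hZf.mono (F.le u) le_rfl) ?_)
      · exact ((hindm A hA).mono hle0 le_rfl).comp hLtp
      · exact Measurable.ite (measurableSet_lt hL (hR0 s)) measurable_const measurable_const
    · refine Filter.Eventually.of_forall fun ω => ?_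
      have h0 : 0 ≤ C := (abs_nonneg _).trans (hC ω)
      rw [Real.norm_eq_abs, abs_mul, abs_mul]
      have h1 : |if L ω < runInf X s ω then (1 : ℝ) else 0| ≤ 1 := by split_ifs <;> simp
      calc _ ≤ 1 * (C * 1) := by
            gcongr
            · exact habs _ _
            · exact hC ω
        _ = C := by ring
  -- first conjunct
  have hconj : P {ω | t < τ ω ∧ NI P p X L q t (L ω + ε t ω) ω = 0} = 0 := by
    have hA : MeasurableSet[(F t).prod inferInstance] (Nf ⁻¹' {0}) := hNm (measurableSet_singleton 0)
    have hi := hbint t t (fun _ => 1) (Nf ⁻¹' {0}) (@measurable_const _ _ _ (F t) _) ⟨1, by simp⟩ hA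
    have k := key t (fun _ => 1) _ (@measurable_const _ _ _ (F t) _) (hindm _ hA)
    have k1 := k.1.1 hi
    have k2 := k.2
    rw [fubini_x ν (fun z => 1 * FM p X t z.2 z.1) _ (q t) k1] at k2
    have hz : ∀ ω x, (Nf ⁻¹' {0}).indicator (fun _ => (1 : ℝ)) (ω, x) *
        ∫ l, 1 * FM p X t l ω * q t (x - l) ∂ν = 0 := by
      intro ω x
      by_cases h : (ω, x) ∈ Nf ⁻¹' {0}
      · have h' : ∫ l, FM p X t l ω * q t (x - l) ∂ν = 0 := h
        simp [h']
      · simp [h]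
    simp only [hz, integral_zero] at k2
    rw [integral_eq_zero_iff_of_nonneg _ hi] at k2
    · rw [← compl_mem_ae_iff]
      filter_upwards [k2] with ω hω
      rintro ⟨h1, h2⟩
      have h3 : (ω, L ω + ε t ω) ∈ Nf ⁻¹' {0} := h2
      simp [h3, (hτ t ω).1 h1] at hω
    · intro ω
      simp only [Pi.zero_apply]
      refine mul_nonneg (Set.indicator_nonneg (fun _ _ => zero_le_one) _) ?_
      split_ifs <;> norm_num
  refine ⟨hconj, ?_⟩
  -- the payoff
  set Y : Ω → ℝ := fun ω => ∑ i : Fin (n + 1),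
        Z i ω * (if ts i.castSucc < τ ω ∧ τ ω ≤ ts i.succ then 1 else 0) with hY
  set S : Ω × ℝ → ℝ := fun z => ∑ i : Fin (n + 1),
        Z i z.1 * (FM p X (ts i.succ) z.2 z.1 - FM p X (ts i.castSucc) z.2 z.1) with hS
  have hlt : ∀ i : Fin (n + 1), ts i.castSucc ≤ ts i.succ := fun i =>
    (hts i.castSucc_lt_succ).le
  have htc : ∀ i : Fin (n + 1), t ≤ ts i.castSucc := fun i =>
    hts0 ▸ hts.monotone (Fin.zero_le _)
  have hZ0 : ∀ i, Measurable (Z i) := fun i => (hZ_meas i).mono (F.le _) le_rfl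
  have hYeq : ∀ ω, Y ω = -∑ i : Fin (n + 1),
      ((Z i ω * if L ω < runInf X (ts i.succ) ω then 1 else 0) -
        (Z i ω * if L ω < runInf X (ts i.castSucc) ω then 1 else 0)) := by
    intro ω
    rw [hY, ← Finset.sum_neg_distrib]
    refine Finset.sum_congr rfl fun i _ => ?_
    simp only [← hτ]
    have := hlt i
    by_cases h1 : ts i.castSucc < τ ω <;> by_cases h2 : ts i.succ < τ ω
    · simp [h1, h2, not_le.2 h2]
    · simp [h1, h2, not_lt.1 h2]
    · exact absurd (this.trans_lt h2) h1
    · simp [h1, h2]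
  have hSm : Measurable S := by
    refine Finset.measurable_sum _ fun i _ => ?_
    exact ((hZ0 i).comp measurable_fst).mul ((hFM0 _).sub (hFM0 _))
  -- identity for the payoff
  have hcoreS : ∀ A : Set (Ω × ℝ), MeasurableSet[(F t).prod inferInstance] A →
      Integrable (fun z : Ω × (ℝ × ℝ) => A.indicator (fun _ => (1 : ℝ)) (z.1, z.2.2) *
        (S (z.1, z.2.1) * q t (z.2.2 - z.2.1))) ρ ∧
      Integrable (fun ω => A.indicator (fun _ => (1 : ℝ)) (ω, L ω + ε t ω) * Y ω) P ∧
      ∫ ω, A.indicator (fun _ => (1 : ℝ)) (ω, L ω + ε t ω) * Y ω ∂P =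
        -∫ z : Ω × (ℝ × ℝ), A.indicator (fun _ => (1 : ℝ)) (z.1, z.2.2) *
        (S (z.1, z.2.1) * q t (z.2.2 - z.2.1)) ∂ρ := by
    intro A hA
    have hi1 := fun i => hbint (ts i.succ) _ (Z i) A (hZ_meas i) (hZ_bdd i) hA
    have hi2 := fun i => hbint (ts i.castSucc) _ (Z i) A (hZ_meas i) (hZ_bdd i) hA
    have hk1 := fun i : Fin (n + 1) => key (ts i.succ) (Z i) _ ((hZ_meas i).mono (F.mono (hlt i)) le_rfl)
      ((hindm A hA).mono (hle _ ((htc i).trans (hlt i))) le_rfl)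
    have hk2 := fun i : Fin (n + 1) => key (ts i.castSucc) (Z i) _ (hZ_meas i)
      ((hindm A hA).mono (hle _ (htc i)) le_rfl)
    have hj1 := fun i => (hk1 i).1.1 (hi1 i)
    have hj2 := fun i => (hk2 i).1.1 (hi2 i)
    have eS : (fun z : Ω × (ℝ × ℝ) => A.indicator (fun _ => (1 : ℝ)) (z.1, z.2.2) *
        (S (z.1, z.2.1) * q t (z.2.2 - z.2.1))) = fun z => ∑ i : Fin (n + 1),
        ((A.indicator (fun _ => (1 : ℝ)) (z.1, z.2.2) *
          ((Z i z.1 * FM p X (ts i.succ) z.2.1 z.1) * q t (z.2.2 - z.2.1))) -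
        (A.indicator (fun _ => (1 : ℝ)) (z.1, z.2.2) *
          ((Z i z.1 * FM p X (ts i.castSucc) z.2.1 z.1) * q t (z.2.2 - z.2.1)))) := by
      ext z
      simp only [hS, Finset.sum_mul, Finset.mul_sum]
      refine Finset.sum_congr rfl fun i _ => ?_
      ring
    have eY : (fun ω => A.indicator (fun _ => (1 : ℝ)) (ω, L ω + ε t ω) * Y ω) =
        fun ω => -∑ i : Fin (n + 1),
        ((A.indicator (fun _ => (1 : ℝ)) (ω, L ω + ε t ω) *
          (Z i ω * if L ω < runInf X (ts i.succ) ω then 1 else 0)) -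
        (A.indicator (fun _ => (1 : ℝ)) (ω, L ω + ε t ω) *
          (Z i ω * if L ω < runInf X (ts i.castSucc) ω then 1 else 0))) := by
      ext ω
      rw [hYeq, mul_neg, Finset.mul_sum]
      congr 1
      refine Finset.sum_congr rfl fun i _ => ?_
      ring
    rw [eS, eY]
    refine ⟨integrable_finsetSum _ fun i _ => (hj1 i).sub (hj2 i),
      (integrable_finsetSum _ fun i _ => (hi1 i).sub (hi2 i)).neg, ?_⟩
    rw [integral_neg]
    congr 1
    refine (integral_finsetSum _ fun i _ => (hi1 i).sub (hi2 i)).trans ?_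
    refine Eq.trans ?_ (integral_finsetSum _ fun i _ => (hj1 i).sub (hj2 i)).symm
    refine Finset.sum_congr rfl fun i _ => ?_
    refine (integral_sub (hi1 i) (hi2 i)).trans ?_
    refine Eq.trans ?_ (integral_sub (hj1 i) (hj2 i)).symm
    rw [(hk1 i).2, (hk2 i).2]
  have hcu := hcoreS Set.univ (@MeasurableSet.univ _ ((F t).prod inferInstance))
  simp only [Set.indicator_univ, one_mul] at hcu
  obtain ⟨hSi, hYi, -⟩ := hcu
  obtain ⟨hwi, hsw⟩ := swap_w (F.le t) ν S w hSm hw0 hw (q t) (hq_meas t) hSi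
  have hcoreY : ∀ A : Set (Ω × ℝ), MeasurableSet[(F t).prod inferInstance] A →
      ∫ ω, A.indicator (fun _ => (1 : ℝ)) (ω, L ω + ε t ω) * Y ω ∂P =
        -∫ ω, ∫ x, A.indicator (fun _ => (1 : ℝ)) (ω, x) * Wf (ω, x) ∂volume ∂P := by
    intro A hA
    rw [(hcoreS A hA).2.2, ← hsw A hA, fubini_x ν w _ (q t) (ind_int ν A (hle0 _ hA) _ hwi)]
  -- the right-hand side
  set h : Ω × ℝ → ℝ := fun z => -(Wf z / Nf z) with hh
  have hhm : Measurable[(F t).prod inferInstance] h :=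
    @quot_meas Ω (F t) Wf Nf hWm hNm
  set R : Ω → ℝ := fun ω => if t < τ ω then
        -((∫ l, w (ω, l) * q t (L ω + ε t ω - l) ∂ν)
          / NI P p X L q t (L ω + ε t ω) ω) else 0 with hRdef
  have hReq : ∀ ω, R ω = h (ω, L ω + ε t ω) * (1 * if L ω < runInf X t ω then 1 else 0) := by
    intro ω
    simp only [hRdef, ← hτ]
    split_ifs
    · simp [hh, hWf, hNI]
    · simp
  have hqi : Integrable (fun z : Ω × (ℝ × ℝ) => h (z.1, z.2.2) *
      ((1 * FM p X t z.2.1 z.1) * q t (z.2.2 - z.2.1))) ρ := by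
    refine int_quot ν (fun z => 1 * FM p X t z.2 z.1) w (q t) (by simpa using hFM0 t) hw0 (hq_meas t)
      (fun z => by simpa using hFMnn _ _ _) (hq_nonneg t) h (hhm.mono hle0 le_rfl) ?_ hwi
    intro ω x
    simp [hh, hWf, hNf]
  have hRi : Integrable R P := by
    have := (key t (fun _ => 1) h (@measurable_const _ _ _ (F t) _) hhm).1.2 hqi
    exact this.congr (Filter.Eventually.of_forall fun ω => (hReq ω).symm)
  have hcoreR : ∀ A : Set (Ω × ℝ), MeasurableSet[(F t).prod inferInstance] A →
      ∫ ω, A.indicator (fun _ => (1 : ℝ)) (ω, L ω + ε t ω) * R ω ∂P =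
        ∫ ω, ∫ x, (A.indicator (fun _ => (1 : ℝ)) (ω, x) * h (ω, x)) * Nf (ω, x) ∂volume ∂P := by
    intro A hA
    have hkm : Measurable[(F t).prod inferInstance]
        (fun z => A.indicator (fun _ => (1 : ℝ)) z * h z) :=
      Measurable.mul (hindm A hA) hhm
    have k := (key t (fun _ => 1) _ (@measurable_const _ _ _ (F t) _) hkm).2
    have hi := ind_int ν A (hle0 _ hA) _ hqi
    simp only [← mul_assoc] at hi
    have hf := fubini_x ν (fun z => 1 * FM p X t z.2 z.1)
      (fun z => A.indicator (fun _ => (1 : ℝ)) z * h z) (q t) (by simpa only [← mul_assoc] using hi)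
    rw [hf] at k
    simp only [one_mul] at k
    rw [← k]
    refine integral_congr_ae (Filter.Eventually.of_forall fun ω => ?_)
    simp only [hReq]
    ring
  have hzero : ∀ A : Set (Ω × ℝ), MeasurableSet[(F t).prod inferInstance] A →
      ∫ ω, A.indicator (fun _ => (1 : ℝ)) (ω, L ω + ε t ω) * Y ω ∂P =
      ∫ ω, A.indicator (fun _ => (1 : ℝ)) (ω, L ω + ε t ω) * R ω ∂P := by
    intro A hA
    have hB : MeasurableSet[(F t).prod inferInstance] (A ∩ (Nf ⁻¹' {0})ᶜ) := 
      @MeasurableSet.inter _ ((F t).prod inferInstance) _ _ hA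
        (@MeasurableSet.compl _ _ ((F t).prod inferInstance) (hNm (measurableSet_singleton 0)))
    have e1 : ∫ ω, A.indicator (fun _ => (1 : ℝ)) (ω, L ω + ε t ω) * Y ω ∂P =
        ∫ ω, (A ∩ (Nf ⁻¹' {0})ᶜ).indicator (fun _ => (1 : ℝ)) (ω, L ω + ε t ω) * Y ω ∂P := by
      refine integral_congr_ae ?_
      have h0 := compl_mem_ae_iff.2 hconj
      filter_upwards [h0] with ω hω
      by_cases hN : Nf (ω, L ω + ε t ω) = 0
      · have hnt : ¬ t < τ ω := fun hc => hω ⟨hc, hN⟩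
        have hY0 : Y ω = 0 := by
          refine Finset.sum_eq_zero fun i _ => ?_
          rw [if_neg, mul_zero]
          rintro ⟨h1, -⟩
          exact hnt ((htc i).trans_lt h1)
        rw [hY0, mul_zero, mul_zero]
      · by_cases hm : (ω, L ω + ε t ω) ∈ A <;> simp [hm, hN]
    rw [e1, hcoreY _ hB, hcoreR A hA, ← integral_neg]
    congr 1
    ext ω
    rw [← integral_neg]
    congr 1
    ext x
    by_cases hN : Nf (ω, x) = 0
    · simp [hN]
    · by_cases hm : (ω, x) ∈ A
      · simp [hm, hN, hh]
      · simp [hm]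
  -- σ-algebras
  have hτm : ∀ s, MeasurableSet {ω | τ ω ≤ s} := by
    intro s
    have : {ω | τ ω ≤ s} = {ω | L ω < runInf X s ω}ᶜ := by
      ext ω
      simp [← hτ]
    rw [this]
    exact (measurableSet_lt hL (hR0 s)).compl
  have hτt0 : MeasurableSet {ω | t < τ ω} := by
    have := (hτm t).compl
    convert this using 1
    ext ω
    simp
  set G : MeasurableSpace Ω := insiderFullSigma F L ε τ t with hG
  set m1 : MeasurableSpace Ω := F t ⊔ MeasurableSpace.comap (fun ω => L ω + ε t ω) inferInstance
    with hm1
  set m2 : MeasurableSpace Ω :=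
    ⨆ s ∈ Set.Iic t, MeasurableSpace.comap (fun ω => ε s ω - ε t ω) inferInstance with hm2
  set K : MeasurableSpace Ω := (⨆ s, F s) ⊔ MeasurableSpace.comap L inferInstance with hK
  set E : MeasurableSpace Ω := MeasurableSpace.comap (ε t) inferInstance with hE
  have hE0 : E ≤ m0 := (hε_meas t).comap_le
  have hK0 : K ≤ m0 := sup_le (iSup_le fun s => F.le s) hL.comap_le
  have hm20 : m2 ≤ m0 := iSup₂_le fun s _ => ((hε_meas s).sub (hε_meas t)).comap_le
  have hm2σ : m2 ≤ ⨆ s, MeasurableSpace.comap (ε s) (inferInstance : MeasurableSpace ℝ) := by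
    refine iSup₂_le fun s _ => Measurable.comap_le ?_
    exact Measurable.sub ((comap_measurable (ε s)).mono (hεσ s) le_rfl)
      ((comap_measurable (ε t)).mono (hεσ t) le_rfl)
  have hind : Indep m2 (E ⊔ K) P :=
    indep_regroup hm20 hE0 hK0 (hε_back t t le_rfl)
      (indep_of_indep_of_le_left hε_indep (sup_le hm2σ (hεσ t)))
  have hFK : ∀ s, F s ≤ E ⊔ K := fun s =>
    ((le_iSup (fun s => (F s : MeasurableSpace Ω)) s).trans le_sup_left).trans le_sup_right
  have hLK : Measurable[E ⊔ K] L := (comap_measurable L).mono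
    ((le_sup_right : _ ≤ K).trans le_sup_right) le_rfl
  have hLtK : Measurable[E ⊔ K] fun ω => L ω + ε t ω :=
    Measurable.add hLK ((comap_measurable (ε t)).mono le_sup_left le_rfl)
  have hm1K : m1 ≤ E ⊔ K := sup_le (hFK t) hLtK.comap_le
  have hm1c : m1 = MeasurableSpace.comap (fun ω => (ω, L ω + ε t ω))
      ((F t).prod (inferInstance : MeasurableSpace ℝ)) := by
    rw [MeasurableSpace.prod, MeasurableSpace.comap_sup, MeasurableSpace.comap_comp,
      MeasurableSpace.comap_comp, hm1]
    congr 1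
    exact MeasurableSpace.comap_id.symm
  have hpair1 : Measurable[m1, (F t).prod inferInstance] fun ω => (ω, L ω + ε t ω) := by
    rw [hm1c]
    exact fun s hs => ⟨s, hs, rfl⟩
  have hhL1 : Measurable[m1] fun ω => h (ω, L ω + ε t ω) := fun s hs => hpair1 (hhm hs)
  have hiteK : ∀ s, Measurable[E ⊔ K] fun ω => if L ω < runInf X s ω then (1 : ℝ) else 0 := by
    intro s
    refine Measurable.ite ?_ (@measurable_const _ _ _ (E ⊔ K) _) (@measurable_const _ _ _ (E ⊔ K) _)
    exact measurableSet_lt hLK ((hR s).mono (hFK s) le_rfl)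
  have hRK : Measurable[E ⊔ K] R := by
    rw [show R = _ from funext hReq]
    simp only [one_mul]
    exact Measurable.mul (hhL1.mono hm1K le_rfl) (hiteK t)
  have hYK : Measurable[E ⊔ K] Y := by
    rw [show Y = _ from funext hYeq]
    refine Measurable.neg (Finset.measurable_sum _ fun i _ => ?_)
    have hz : Measurable[E ⊔ K] (Z i) := (hZ_meas i).mono (hFK _) le_rfl
    exact Measurable.sub (Measurable.mul hz (hiteK _)) (Measurable.mul hz (hiteK _))
  have hΔ1 : ∀ A, MeasurableSet[m1] A → ∫ ω in A, (Y ω - R ω) ∂P = 0 := by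
    intro A hA
    have hA0 : MeasurableSet[m0] A := (hm1K.trans (sup_le hE0 hK0)) _ hA
    rw [hm1c] at hA
    obtain ⟨B, hB, rfl⟩ := hA
    have hz := hzero B hB
    have e : ∀ f : Ω → ℝ, ∫ ω, B.indicator (fun _ => (1 : ℝ)) (ω, L ω + ε t ω) * f ω ∂P =
        ∫ ω in (fun ω => (ω, L ω + ε t ω)) ⁻¹' B, f ω ∂P := by
      intro f
      rw [← integral_indicator hA0]
      congr 1
      ext ω
      by_cases hm : (ω, L ω + ε t ω) ∈ B <;> simp [Set.indicator, hm]
    rw [e, e] at hz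
    rw [integral_sub hYi.integrableOn hRi.integrableOn, hz, sub_self]
  have hΔ2 := setInt_sup hm1K (sup_le hE0 hK0) hm20 hind (fun ω => Y ω - R ω)
    (Measurable.sub hYK hRK) (hYi.sub hRi) hΔ1
  set H : MeasurableSpace Ω := F t ⊔ (⨆ s ∈ Set.Iic t,
    MeasurableSpace.comap (fun ω => L ω + ε s ω) inferInstance) with hH
  have hGdef : G = H ⊔ defaultSigma τ t := rfl
  have hG0 : G ≤ m0 := by
    rw [hGdef]
    refine sup_le (sup_le (F.le t) (iSup₂_le fun s _ => (hL.add (hε_meas s)).comap_le)) ?_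
    refine MeasurableSpace.generateFrom_le ?_
    rintro _ ⟨s, -, rfl⟩
    exact hτm s
  have hHm : H ≤ m1 ⊔ m2 := by
    refine sup_le (le_sup_left.trans le_sup_left) (iSup₂_le fun s hs => Measurable.comap_le ?_)
    have e : (fun ω => L ω + ε s ω) = fun ω => (L ω + ε t ω) + (ε s ω - ε t ω) := by
      ext ω
      ring
    rw [e]
    refine Measurable.add ((comap_measurable (fun ω => L ω + ε t ω)).mono
      (le_sup_right.trans le_sup_left) le_rfl) ((comap_measurable (fun ω => ε s ω - ε t ω)).mono
      ((le_iSup₂ (f := fun s (_ : s ∈ Set.Iic t) =>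
        MeasurableSpace.comap (fun ω => ε s ω - ε t ω) (inferInstance : MeasurableSpace ℝ)) s hs).trans
        le_sup_right) le_rfl)
  refine (ae_eq_condExp_of_forall_setIntegral_eq hG0 hYi (fun _ _ _ => hRi.integrableOn) ?_ ?_).symm
  · intro A hA _
    have hA0 := hG0 _ hA
    obtain ⟨A', hA', hAA⟩ := sub_G τ t A hA
    have hA'0 : MeasurableSet[m0] A' := (hHm.trans (sup_le (hm1K.trans (sup_le hE0 hK0)) hm20)) _ hA'
    have hsupp : ∀ B : Set Ω, MeasurableSet[m0] B → ∫ ω in B, (Y ω - R ω) ∂P =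
        ∫ ω in B ∩ {ω | t < τ ω}, (Y ω - R ω) ∂P := by
      intro B hB
      rw [← integral_indicator hB, ← integral_indicator (hB.inter hτt0)]
      congr 1
      ext ω
      by_cases ht : t < τ ω
      · by_cases hb : ω ∈ B <;> simp [Set.indicator, hb, ht]
      · have hY0 : Y ω = 0 := by
          refine Finset.sum_eq_zero fun i _ => ?_
          rw [if_neg, mul_zero]
          rintro ⟨h1, -⟩
          exact ht ((htc i).trans_lt h1)
        have hR1 : R ω = 0 := if_neg ht
        simp [Set.indicator, hY0, hR1]
    have : ∫ ω in A, (Y ω - R ω) ∂P = 0 := by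
      rw [hsupp A hA0, hAA, ← hsupp A' hA'0]
      exact hΔ2 A' (hHm _ hA')
    rw [integral_sub hYi.integrableOn hRi.integrableOn] at this
    linarith
  · refine StronglyMeasurable.aestronglyMeasurable (Measurable.stronglyMeasurable ?_)
    have hm1G : m1 ≤ G := by
      rw [hGdef]
      refine le_trans ?_ le_sup_left
      refine sup_le_sup le_rfl ?_
      exact le_iSup₂ (f := fun s (_ : s ∈ Set.Iic t) =>
        MeasurableSpace.comap (fun ω => L ω + ε s ω) (inferInstance : MeasurableSpace ℝ)) t
        (Set.mem_Iic.2 le_rfl)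
    have hset : MeasurableSet[G] {ω | t < τ ω} := by
      have : MeasurableSet[G] {ω | τ ω ≤ t} := by
        rw [hGdef]
        refine (le_sup_right : defaultSigma τ t ≤ _) _ ?_
        exact MeasurableSpace.measurableSet_generateFrom ⟨t, le_rfl, rfl⟩
      have h2 := @MeasurableSet.compl _ _ (G) this
      convert h2 using 1
      ext ω
      simp
    refine Measurable.ite hset (hhL1.mono hm1G le_rfl)
      (@measurable_const _ _ _ (G) _)
end
end
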